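/- For every K > 0 there is a constant C = C(K) with the following property. Let (u,P,d) be a smooth solution of the nematic liquid crystal system on ℝ²×(0,T) satisfying the Schwartz decay assumption, and suppose that ‖u(t,·)‖_{L²} ≤ K and ‖∇d(t,·)‖_{L²} ≤ K for all t ∈ (0,T). Write ω = ∂_1 u_2 − ∂_2 u_1. Then for every t ∈ (0,T), (d/dt)( ‖Δu(t,·)‖_{L²}² + ‖∇Δd(t,·)‖_{L²}² ) + ½( ‖∇Δu(t,·)‖_{L²}² + ‖Δ²d(t,·)‖_{L²}² ) ≤ C( 1 + ‖ω(t,·)‖_{L²}^{12} + ‖Δd(t,·)‖_{L²}^{12} ). -/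

import Mathlib

open MeasureTheory Real

noncomputable section

/-- `pd i f x` is the `i`-th partial derivative `∂ᵢ f (x)` of `f : ℝⁿ → ℝ`. -/
def pd {n : ℕ} (i : Fin n) (f : EuclideanSpace ℝ (Fin n) → ℝ)
    (x : EuclideanSpace ℝ (Fin n)) : ℝ :=
  fderiv ℝ f x (EuclideanSpace.single i 1)

/-- `lap f x` is the Laplacian `Δf(x) = Σᵢ ∂ᵢ∂ᵢ f (x)`. -/
def lap {n : ℕ} (f : EuclideanSpace ℝ (Fin n) → ℝ)
    (x : EuclideanSpace ℝ (Fin n)) : ℝ :=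
  ∑ i, pd i (fun y => pd i f y) x
/-- The simplified Ericksen–Leslie nematic liquid crystal system on ℝⁿ × (0,T). -/
structure IsNLC (n : ℕ) (T : ℝ)
    (u : ℝ → EuclideanSpace ℝ (Fin n) → EuclideanSpace ℝ (Fin n))
    (P : ℝ → EuclideanSpace ℝ (Fin n) → ℝ)
    (d : ℝ → EuclideanSpace ℝ (Fin n) → EuclideanSpace ℝ (Fin 3)) : Prop where
  smooth_u : ContDiff ℝ (⊤ : ℕ∞) (Function.uncurry u)
  smooth_P : ContDiff ℝ (⊤ : ℕ∞) (Function.uncurry P)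
  smooth_d : ContDiff ℝ (⊤ : ℕ∞) (Function.uncurry d)
  unit : ∀ t ∈ Set.Ioo (0:ℝ) T, ∀ x, ‖d t x‖ = 1
  momentum : ∀ t ∈ Set.Ioo (0:ℝ) T, ∀ x, ∀ j : Fin n,
    deriv (fun s => u s x j) t - lap (fun y => u t y j) x
      + (∑ i, u t x i * pd i (fun y => u t y j) x) + pd j (P t) x
      = - ∑ i, pd i (fun y => ∑ k : Fin 3,
          pd i (fun z => d t z k) y * pd j (fun z => d t z k) y) x
  director : ∀ t ∈ Set.Ioo (0:ℝ) T, ∀ x, ∀ k : Fin 3,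
    deriv (fun s => d s x k) t + ∑ i, u t x i * pd i (fun y => d t y k) x
      = lap (fun y => d t y k) x
        + (∑ i, ∑ k' : Fin 3, (pd i (fun y => d t y k') x) ^ 2) * d t x k
  divfree : ∀ t ∈ Set.Ioo (0:ℝ) T, ∀ x, ∑ i, pd i (fun y => u t y i) x = 0

/-- A family of functions, Schwartz in x with seminorms locally uniformly bounded in t ∈ (0,T). -/
def SchwartzFamily {n : ℕ} (T : ℝ) (f : ℝ → EuclideanSpace ℝ (Fin n) → ℝ) : Prop :=
  ∀ t₀ ∈ Set.Ioo (0:ℝ) T, ∀ k l : ℕ, ∃ ε > 0, ∃ C : ℝ,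
    ∀ t ∈ Set.Ioo (0:ℝ) T, |t - t₀| < ε →
      ∀ x, ‖x‖ ^ k * ‖iteratedFDeriv ℝ l (f t) x‖ ≤ C

/-- Schwartz decay assumption: u, ∂ₜu, ∇d, ∂ₜ∇d are Schwartz in x, locally uniformly in t. -/
def SchwartzDecay (n : ℕ) (T : ℝ)
    (u : ℝ → EuclideanSpace ℝ (Fin n) → EuclideanSpace ℝ (Fin n))
    (d : ℝ → EuclideanSpace ℝ (Fin n) → EuclideanSpace ℝ (Fin 3)) : Prop :=
  (∀ j : Fin n, SchwartzFamily T fun t x => u t x j) ∧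
  (∀ j : Fin n, SchwartzFamily T fun t x => deriv (fun s => u s x j) t) ∧
  (∀ (i : Fin n) (k : Fin 3), SchwartzFamily T fun t x => pd i (fun y => d t y k) x) ∧
  (∀ (i : Fin n) (k : Fin 3),
    SchwartzFamily T fun t x => deriv (fun s => pd i (fun y => d s y k) x) t)

/-- ‖Δd‖_{L²} for d : ℝⁿ → ℝ³. -/
def lapL2 {n : ℕ} (d : EuclideanSpace ℝ (Fin n) → EuclideanSpace ℝ (Fin 3)) : ℝ :=
  Real.sqrt (∑ k : Fin 3, ∫ x, (lap (fun z => d z k) x) ^ 2)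

/-- ‖∇d‖_{L²} for d : ℝⁿ → ℝ³. -/
def gradL2 {n : ℕ} (d : EuclideanSpace ℝ (Fin n) → EuclideanSpace ℝ (Fin 3)) : ℝ :=
  Real.sqrt (∑ i, ∑ k : Fin 3, ∫ x, (pd i (fun z => d z k) x) ^ 2)

/-- ‖∇Δd‖_{L²} for d : ℝⁿ → ℝ³. -/
def gradLapL2 {n : ℕ} (d : EuclideanSpace ℝ (Fin n) → EuclideanSpace ℝ (Fin 3)) : ℝ :=
  Real.sqrt (∑ i, ∑ k : Fin 3, ∫ x, (pd i (lap (fun z => d z k)) x) ^ 2)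

/-- ‖Δ²d‖_{L²} for d : ℝⁿ → ℝ³. -/
def bilapL2 {n : ℕ} (d : EuclideanSpace ℝ (Fin n) → EuclideanSpace ℝ (Fin 3)) : ℝ :=
  Real.sqrt (∑ k : Fin 3, ∫ x, (lap (lap (fun z => d z k)) x) ^ 2)

/-- ‖u‖_{L²} for a vector field u : ℝⁿ → ℝⁿ. -/
def L2u {n : ℕ} (u : EuclideanSpace ℝ (Fin n) → EuclideanSpace ℝ (Fin n)) : ℝ :=
  Real.sqrt (∑ i, ∫ x, (u x i) ^ 2)

/-- ‖Δu‖_{L²} for a vector field u : ℝⁿ → ℝⁿ. -/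
def lapL2u {n : ℕ} (u : EuclideanSpace ℝ (Fin n) → EuclideanSpace ℝ (Fin n)) : ℝ :=
  Real.sqrt (∑ i, ∫ x, (lap (fun y => u y i) x) ^ 2)

/-- ‖∇Δu‖_{L²} for a vector field u : ℝⁿ → ℝⁿ. -/
def gradLapL2u {n : ℕ} (u : EuclideanSpace ℝ (Fin n) → EuclideanSpace ℝ (Fin n)) : ℝ :=
  Real.sqrt (∑ i, ∑ j, ∫ x, (pd i (lap (fun y => u y j)) x) ^ 2)

/-- The scalar vorticity ω = ∂₁u₂ − ∂₂u₁ in 2D. -/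
def vort2 (u : EuclideanSpace ℝ (Fin 2) → EuclideanSpace ℝ (Fin 2))
    (x : EuclideanSpace ℝ (Fin 2)) : ℝ :=
  pd 0 (fun y => u y 1) x - pd 1 (fun y => u y 0) x

/-- ‖ω‖_{L²} for the 2D scalar vorticity. -/
def vort2L2 (u : EuclideanSpace ℝ (Fin 2) → EuclideanSpace ℝ (Fin 2)) : ℝ :=
  Real.sqrt (∫ x, (vort2 u x) ^ 2)


abbrev E2 : Type := EuclideanSpace ℝ (Fin 2)

/-- `f` is (the underlying function of) a Schwartz function. -/
def Sz (f : E2 → ℝ) : Prop := ∃ g : SchwartzMap E2 ℝ, ∀ x, g x = f x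

namespace Sz

theorem eq_coe {f : E2 → ℝ} (hf : Sz f) : ∃ g : SchwartzMap E2 ℝ, f = ⇑g := by
  obtain ⟨g, hg⟩ := hf
  exact ⟨g, funext fun x => (hg x).symm⟩

theorem contDiff {f : E2 → ℝ} (hf : Sz f) : ContDiff ℝ (⊤ : ℕ∞) f := by
  obtain ⟨g, rfl⟩ := hf.eq_coe
  exact g.smooth _

theorem differentiable {f : E2 → ℝ} (hf : Sz f) : Differentiable ℝ f :=
  hf.contDiff.differentiable (by simp)

theorem continuous {f : E2 → ℝ} (hf : Sz f) : Continuous f := hf.contDiff.continuous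

theorem integrable {f : E2 → ℝ} (hf : Sz f) : Integrable f := by
  obtain ⟨g, rfl⟩ := hf.eq_coe
  exact g.integrable

theorem add {f g : E2 → ℝ} (hf : Sz f) (hg : Sz g) : Sz (fun x => f x + g x) := by
  obtain ⟨a, ha⟩ := hf
  obtain ⟨b, hb⟩ := hg
  exact ⟨a + b, fun x => by simp [ha, hb]⟩

theorem sub {f g : E2 → ℝ} (hf : Sz f) (hg : Sz g) : Sz (fun x => f x - g x) := by
  obtain ⟨a, ha⟩ := hf
  obtain ⟨b, hb⟩ := hg
  exact ⟨a - b, fun x => by simp [ha, hb]⟩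

theorem neg {f : E2 → ℝ} (hf : Sz f) : Sz (fun x => - f x) := by
  obtain ⟨a, ha⟩ := hf
  exact ⟨- a, fun x => by simp [ha]⟩

theorem const_mul {f : E2 → ℝ} (c : ℝ) (hf : Sz f) : Sz (fun x => c * f x) := by
  obtain ⟨a, ha⟩ := hf
  exact ⟨c • a, fun x => by simp [ha]⟩

theorem mul {f g : E2 → ℝ} (hf : Sz f) (hg : Sz g) : Sz (fun x => f x * g x) := by
  obtain ⟨a, ha⟩ := hf
  obtain ⟨b, hb⟩ := hg
  exact ⟨SchwartzMap.pairing (ContinuousLinearMap.mul ℝ ℝ) a b, fun x => by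
    simp [SchwartzMap.pairing_apply_apply, ha, hb]⟩

theorem zero : Sz (fun _ => 0) := ⟨0, fun x => by simp⟩

theorem sum {ι : Type*} (s : Finset ι) {f : ι → E2 → ℝ} (hf : ∀ i, Sz (f i)) :
    Sz (fun x => ∑ i ∈ s, f i x) := by
  classical
  induction s using Finset.induction_on with
  | empty => simpa using zero
  | insert a s ha ih =>
    simp only [Finset.sum_insert ha]
    exact (hf a).add ih

theorem pd {f : E2 → ℝ} (i : Fin 2) (hf : Sz f) : Sz (pd i f) := by
  obtain ⟨g, rfl⟩ := hf.eq_coe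
  refine ⟨LineDeriv.lineDerivOp (EuclideanSpace.single i (1:ℝ)) g, fun x => ?_⟩
  rw [SchwartzMap.lineDerivOp_apply_eq_fderiv]
  rfl

theorem lap {f : E2 → ℝ} (hf : Sz f) : Sz (lap f) :=
  Sz.sum (f := fun i x => _root_.pd i (fun y => _root_.pd i f y) x) Finset.univ
    (fun i => (hf.pd i).pd i)

theorem congr {f g : E2 → ℝ} (hf : Sz f) (h : ∀ x, f x = g x) : Sz g := by
  obtain ⟨a, ha⟩ := hf
  exact ⟨a, fun x => (ha x).trans (h x)⟩

theorem sq {f : E2 → ℝ} (hf : Sz f) : Sz (fun x => f x ^ 2) :=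
  (hf.mul hf).congr fun x => by ring

theorem pow4 {f : E2 → ℝ} (hf : Sz f) : Sz (fun x => f x ^ 4) :=
  (hf.sq.mul hf.sq).congr fun x => by ring

end Sz

theorem pd_add {f g : E2 → ℝ} (hf : Differentiable ℝ f) (hg : Differentiable ℝ g) (i : Fin 2)
    (x : E2) : pd i (fun y => f y + g y) x = pd i f x + pd i g x := by
  unfold pd
  rw [fderiv_fun_add (hf x) (hg x)]; rfl

theorem pd_sub {f g : E2 → ℝ} (hf : Differentiable ℝ f) (hg : Differentiable ℝ g) (i : Fin 2)
    (x : E2) : pd i (fun y => f y - g y) x = pd i f x - pd i g x := by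
  unfold pd
  rw [fderiv_fun_sub (hf x) (hg x)]; rfl

theorem pd_sum {ι : Type*} (s : Finset ι) {f : ι → E2 → ℝ} (hf : ∀ i, Differentiable ℝ (f i))
    (i : Fin 2) (x : E2) : pd i (fun y => ∑ j ∈ s, f j y) x = ∑ j ∈ s, pd i (f j) x := by
  unfold pd
  rw [fderiv_fun_sum fun j _ => hf j x]
  simp

theorem pd_mul {f g : E2 → ℝ} (hf : Differentiable ℝ f) (hg : Differentiable ℝ g) (i : Fin 2)
    (x : E2) : pd i (fun y => f y * g y) x = pd i f x * g x + f x * pd i g x := by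
  unfold pd
  rw [fderiv_fun_mul (hf x) (hg x)]
  simp
  ring

theorem contDiff_pd {f : E2 → ℝ} (hf : ContDiff ℝ (⊤ : ℕ∞) f) (i : Fin 2) :
    ContDiff ℝ (⊤ : ℕ∞) (pd i f) := by
  unfold pd
  exact (hf.fderiv_right (m := (⊤ : ℕ∞)) (by simp)).clm_apply contDiff_const

theorem pd_differentiable {f : E2 → ℝ} (hf : ContDiff ℝ (⊤ : ℕ∞) f) (i : Fin 2) :
    Differentiable ℝ (pd i f) := (contDiff_pd hf i).differentiable (by simp)

theorem pd_comm {f : E2 → ℝ} (hf : ContDiff ℝ (⊤ : ℕ∞) f) (i j : Fin 2) (x : E2) :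
    pd i (pd j f) x = pd j (pd i f) x := by
  have h1 : ∀ a b : Fin 2, pd a (pd b f) x =
      fderiv ℝ (fderiv ℝ f) x (EuclideanSpace.single a 1) (EuclideanSpace.single b 1) := by
    intro a b
    have hd : DifferentiableAt ℝ (fderiv ℝ f) x :=
      (hf.fderiv_right (m := (⊤ : ℕ∞)) (by simp)).differentiable (by simp) x
    change fderiv ℝ (fun y => fderiv ℝ f y (EuclideanSpace.single b 1)) x _ = _
    rw [fderiv_clm_apply hd (differentiableAt_const _)]
    simp
  rw [h1, h1]
  exact (hf.contDiffAt.isSymmSndFDerivAt (by simpa using WithTop.coe_le_coe.2 (le_top : (2 : ℕ∞) ≤ ⊤))) _ _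

theorem pd_comm' {f : E2 → ℝ} (hf : ContDiff ℝ (⊤ : ℕ∞) f) (i j : Fin 2) :
    pd i (pd j f) = pd j (pd i f) := funext fun x => pd_comm hf i j x

theorem lap_eq (f : E2 → ℝ) : lap f = fun x => ∑ i, pd i (pd i f) x := rfl

theorem contDiff_lap {f : E2 → ℝ} (hf : ContDiff ℝ (⊤ : ℕ∞) f) :
    ContDiff ℝ (⊤ : ℕ∞) (lap f) := by
  rw [lap_eq]
  exact ContDiff.sum fun i _ => contDiff_pd (contDiff_pd hf i) i

theorem pd_lap {f : E2 → ℝ} (hf : ContDiff ℝ (⊤ : ℕ∞) f) (i : Fin 2) :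
    pd i (lap f) = lap (pd i f) := by
  funext x
  rw [lap_eq, lap_eq, pd_sum _ (fun j => pd_differentiable (contDiff_pd hf j) j)]
  refine Finset.sum_congr rfl fun j _ => ?_
  rw [pd_comm (contDiff_pd hf j) i j, pd_comm' hf i j]

/-- Integration by parts. -/
theorem ibp {f g : E2 → ℝ} (hf : Sz f) (hg : Sz g) (i : Fin 2) :
    ∫ x, f x * pd i g x = - ∫ x, pd i f x * g x := by
  unfold pd
  exact integral_mul_fderiv_eq_neg_fderiv_mul_of_integrable ((hf.pd i).mul hg).integrable
    (hf.mul (hg.pd i)).integrable (hf.mul hg).integrable (fun x _ => hf.differentiable x)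
    (fun x _ => hg.differentiable x)

theorem ibp2 {f g : E2 → ℝ} (hf : Sz f) (hg : Sz g) (i j : Fin 2) :
    ∫ x, pd i f x * pd j g x = ∫ x, pd j f x * pd i g x := by
  rw [ibp (hf.pd i) hg j, pd_comm' hf.contDiff j i, ibp (hf.pd j) hg i]

/-- `∑ᵢ ∫ ∂ᵢf ∂ᵢg = - ∫ Δf g`. -/
theorem ibp_lap {f g : E2 → ℝ} (hf : Sz f) (hg : Sz g) :
    ∑ i, ∫ x, pd i f x * pd i g x = - ∫ x, lap f x * g x := by
  have h : ∀ x, lap f x * g x = ∑ i, pd i (pd i f) x * g x := fun x => by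
    rw [lap_eq, Finset.sum_mul]
  simp_rw [h]
  rw [integral_finsetSum _ fun i _ => (((hf.pd i).pd i).mul hg).integrable,
    ← Finset.sum_neg_distrib]
  exact Finset.sum_congr rfl fun i _ => ibp (hf.pd i) hg i

/-- The `L²` norm. -/
def N2 (f : E2 → ℝ) : ℝ := Real.sqrt (∫ x, f x ^ 2)

theorem N2_nonneg (f : E2 → ℝ) : 0 ≤ N2 f := Real.sqrt_nonneg _

theorem N2_sq (f : E2 → ℝ) : N2 f ^ 2 = ∫ x, f x ^ 2 :=
  Real.sq_sqrt (integral_nonneg fun _ => sq_nonneg _)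

/-- Cauchy-Schwarz for nonnegative continuous integrands. -/
theorem cs_sq {f g : E2 → ℝ} (hf : Continuous f) (hg : Continuous g)
    (hf2 : Integrable (fun x => f x ^ 2)) (hg2 : Integrable (fun x => g x ^ 2))  :
    (∫ x, f x * g x) ^ 2 ≤ (∫ x, f x ^ 2) * ∫ x, g x ^ 2 := by
  have hfg : Integrable (fun x => f x * g x) := by
    refine (hf2.add hg2).mono' (hf.mul hg).aestronglyMeasurable (Filter.Eventually.of_forall ?_)
    intro x
    simp only [Pi.add_apply, Real.norm_eq_abs, abs_mul]
    nlinarith [sq_nonneg (|f x| - |g x|), sq_abs (f x), sq_abs (g x), abs_nonneg (f x),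
      abs_nonneg (g x), mul_nonneg (abs_nonneg (f x)) (abs_nonneg (g x))]
  have key : ∀ r : ℝ, 0 ≤ (∫ x, g x ^ 2) * (r * r) + (2 * ∫ x, f x * g x) * r + ∫ x, f x ^ 2 := by
    intro r
    have h : 0 ≤ ∫ x, (f x + r * g x) ^ 2 := integral_nonneg fun x => sq_nonneg _
    have e : (fun x => (f x + r * g x) ^ 2)
        = fun x => (f x ^ 2 + (2 * r) * (f x * g x)) + (r * r) * g x ^ 2 := by
      funext x; ring
    have i1 : Integrable (fun x => f x ^ 2 + (2 * r) * (f x * g x)) := hf2.add (hfg.const_mul _)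
    rw [e, integral_add i1 (hg2.const_mul _),
      integral_add hf2 (hfg.const_mul _), integral_const_mul, integral_const_mul] at h
    linarith
  have := discrim_le_zero key
  unfold discrim at this
  nlinarith

theorem cs_N2 {f g : E2 → ℝ} (hf : Sz f) (hg : Sz g) : |∫ x, f x * g x| ≤ N2 f * N2 g := by
  have h := cs_sq hf.continuous hg.continuous hf.sq.integrable hg.sq.integrable
  rw [← N2_sq, ← N2_sq, ← mul_pow] at h
  exact abs_le_of_sq_le_sq h (mul_nonneg (N2_nonneg _) (N2_nonneg _))


/-- The compactly supported Sobolev inequality in real form. -/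
theorem sobolev_cpt : ∃ c : ℝ, 0 ≤ c ∧ ∀ (v : E2 → ℝ) (g : E2 → ℝ), ContDiff ℝ 1 v →
    HasCompactSupport v → (∀ x, ‖fderiv ℝ v x‖ ≤ g x) → Integrable g →
    ∫ x, v x ^ 2 ≤ c * (∫ x, g x) ^ 2 := by
  refine ⟨lintegralPowLePowLIntegralFDerivConst (volume : Measure E2) 2, NNReal.coe_nonneg _, ?_⟩
  intro v g hv hc hg hgi
  have hp : Real.HolderConjugate (Module.finrank ℝ E2) 2 := by
    have : Module.finrank ℝ E2 = 2 := by simp [E2]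
    rw [this]
    exact_mod_cast Real.HolderConjugate.two_two
  have h := lintegral_pow_le_pow_lintegral_fderiv (volume : Measure E2) hv hc hp
  have hg0 : ∀ x, 0 ≤ g x := fun x => (norm_nonneg _).trans (hg x)
  have h1 : ∫⁻ x, ‖fderiv ℝ v x‖ₑ ≤ ENNReal.ofReal (∫ x, g x) := by
    rw [ofReal_integral_eq_lintegral_ofReal hgi (Filter.Eventually.of_forall hg0)]
    refine lintegral_mono fun x => ?_
    rw [← ofReal_norm]
    exact ENNReal.ofReal_le_ofReal (hg x)
  have hvi : Integrable (fun x => v x ^ 2) := by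
    refine Continuous.integrable_of_hasCompactSupport (hv.continuous.pow 2) ?_
    exact hc.comp_left (g := fun y : ℝ => y ^ 2) (by simp)
  have h2 : ENNReal.ofReal (∫ x, v x ^ 2) = ∫⁻ x, ‖v x‖ₑ ^ (2:ℝ) := by
    rw [ofReal_integral_eq_lintegral_ofReal hvi (Filter.Eventually.of_forall fun x => sq_nonneg _)]
    refine lintegral_congr fun x => ?_
    rw [← ofReal_norm, ENNReal.ofReal_rpow_of_nonneg (norm_nonneg _) (by norm_num)]
    simp
  rw [← h2] at h
  have hG : 0 ≤ ∫ x, g x := integral_nonneg hg0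
  have h3 : ENNReal.ofReal (∫ x, v x ^ 2) ≤ ENNReal.ofReal
      (lintegralPowLePowLIntegralFDerivConst (volume : Measure E2) 2 * (∫ x, g x) ^ 2) := by
    refine h.trans ?_
    rw [ENNReal.ofReal_mul (NNReal.coe_nonneg _), ENNReal.ofReal_coe_nnreal]
    gcongr
    rw [← Real.rpow_two, ← ENNReal.ofReal_rpow_of_nonneg hG (by norm_num)]
    gcongr
  exact (ENNReal.ofReal_le_ofReal_iff (by positivity)).1 h3

theorem fderiv_norm_le (f : E2 → ℝ) (x : E2) : ‖fderiv ℝ f x‖ ≤ ∑ i, |pd i f x| := by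
  refine ContinuousLinearMap.opNorm_le_bound _ (Finset.sum_nonneg fun i _ => abs_nonneg _) ?_
  intro v
  have hv : v = ∑ i, v i • EuclideanSpace.single i (1:ℝ) := by
    ext j
    simp [Fin.sum_univ_two]
    fin_cases j <;> simp
  have hL : fderiv ℝ f x v = ∑ i, v i * pd i f x := by
    conv_lhs => rw [hv]
    rw [map_sum]
    refine Finset.sum_congr rfl fun i _ => ?_
    rw [map_smul]; rfl
  rw [hL, Real.norm_eq_abs, Finset.sum_mul]
  refine (Finset.abs_sum_le_sum_abs _ _).trans (Finset.sum_le_sum fun i _ => ?_)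
  rw [abs_mul, mul_comm]
  exact mul_le_mul_of_nonneg_left (PiLp.norm_apply_le v i) (abs_nonneg _)

theorem exists_cutoff : ∃ (χ : ℕ → E2 → ℝ) (M : ℝ), 0 ≤ M ∧ (∀ n, ContDiff ℝ 1 (χ n)) ∧
    (∀ n, HasCompactSupport (χ n)) ∧ (∀ n x, 0 ≤ χ n x ∧ χ n x ≤ 1) ∧
    (∀ n x, ‖fderiv ℝ (χ n) x‖ ≤ M / (n + 1)) ∧
    (∀ x, Filter.Tendsto (fun n => χ n x) Filter.atTop (nhds 1)) := by
  let b : ContDiffBump (0 : E2) := ⟨1, 2, by norm_num, by norm_num⟩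
  have hb : ContDiff ℝ 1 b := b.contDiff
  have hcd : HasCompactSupport (fderiv ℝ (b : E2 → ℝ)) := b.hasCompactSupport.fderiv ℝ
  obtain ⟨M, hM⟩ := hcd.exists_bound_of_continuous (hb.continuous_fderiv (by simp))
  have hM0 : 0 ≤ M := (norm_nonneg _).trans (hM 0)
  refine ⟨fun n x => b (((n:ℝ) + 1)⁻¹ • x), M, hM0, ?_, ?_, ?_, ?_, ?_⟩
  · intro n
    exact hb.comp (contDiff_const_smul _)
  · intro n
    have hne : ((n:ℝ) + 1)⁻¹ ≠ 0 := by positivity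
    exact b.hasCompactSupport.comp_smul hne
  · intro n x
    exact ⟨b.nonneg, b.le_one⟩
  · intro n x
    have hd : HasFDerivAt (fun x : E2 => b (((n:ℝ) + 1)⁻¹ • x))
        ((fderiv ℝ b (((n:ℝ) + 1)⁻¹ • x)).comp (((n:ℝ) + 1)⁻¹ • ContinuousLinearMap.id ℝ E2)) x := by
      refine HasFDerivAt.comp (g := (b : E2 → ℝ)) (f := fun x : E2 => ((n:ℝ) + 1)⁻¹ • x) x (hb.differentiable (by simp) _).hasFDerivAt ?_
      exact (((((n:ℝ) + 1)⁻¹ • ContinuousLinearMap.id ℝ E2) : E2 →L[ℝ] E2).hasFDerivAt)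
    rw [hd.fderiv, ContinuousLinearMap.comp_smul, ContinuousLinearMap.comp_id, norm_smul,
      Real.norm_of_nonneg (by positivity), div_eq_mul_inv, mul_comm]
    exact mul_le_mul_of_nonneg_right (hM _) (by positivity)
  · intro x
    refine tendsto_const_nhds.congr' ?_
    filter_upwards [Filter.eventually_ge_atTop ⌈‖x‖⌉₊] with n hn
    symm
    apply b.one_of_mem_closedBall
    have h1 : ‖x‖ ≤ n := Nat.ceil_le.1 hn
    simp only [mem_closedBall_zero_iff, norm_smul]
    rw [Real.norm_of_nonneg (by positivity), inv_mul_le_iff₀ (by positivity)]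
    change ‖x‖ ≤ ((n:ℝ) + 1) * 1
    linarith

theorem Sz.abs_integrable {f : E2 → ℝ} (hf : Sz f) : Integrable (fun x => |f x|) :=
  hf.integrable.abs

/-- Ladyzhenskaya's inequality. -/
theorem lady : ∃ c : ℝ, 0 ≤ c ∧ ∀ f : E2 → ℝ, Sz f →
    ∫ x, f x ^ 4 ≤ c * ((∫ x, f x ^ 2) * ∑ i, ∫ x, pd i f x ^ 2) := by
  obtain ⟨c, hc, hS⟩ := sobolev_cpt
  obtain ⟨χ, M, hM, hχ1, hχc, hχb, hχd, hχt⟩ := exists_cutoff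
  refine ⟨c * 8, by positivity, ?_⟩
  intro f hf
  set h : E2 → ℝ := fun x => ∑ i, |pd i f x| with hh
  have hhc : Continuous h := continuous_finsetSum _ fun i _ => (hf.pd i).continuous.abs
  have hh0 : ∀ x, 0 ≤ h x := fun x => Finset.sum_nonneg fun i _ => abs_nonneg _
  have hfh : Integrable (fun x => |f x| * h x) := by
    simp only [hh, Finset.mul_sum, ← abs_mul]
    exact integrable_finsetSum _ fun i _ => (hf.mul (hf.pd i)).integrable.abs
  have hh2le : ∀ x, h x ^ 2 ≤ 2 * ∑ i, pd i f x ^ 2 := by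
    intro x
    simp only [hh, Fin.sum_univ_two]
    nlinarith [sq_nonneg (|pd 0 f x| - |pd 1 f x|), sq_abs (pd 0 f x), sq_abs (pd 1 f x)]
  have hsumI : Integrable (fun x => 2 * ∑ i, pd i f x ^ 2) :=
    (integrable_finsetSum _ fun i _ => (hf.pd i).sq.integrable).const_mul _
  have hh2 : Integrable (fun x => h x ^ 2) := by
    refine hsumI.mono' (hhc.pow 2).aestronglyMeasurable (Filter.Eventually.of_forall fun x => ?_)
    rw [Real.norm_of_nonneg (sq_nonneg _)]
    exact hh2le x
  have hIn2 : ∫ x, h x ^ 2 ≤ 2 * ∑ i, ∫ x, pd i f x ^ 2 := by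
    refine (integral_mono hh2 hsumI hh2le).trans (le_of_eq ?_)
    rw [integral_const_mul, integral_finsetSum _ fun i _ => (hf.pd i).sq.integrable]
  set a : ℝ := ∫ x, |f x| * h x with ha
  set b : ℝ := ∫ x, f x ^ 2 with hb
  -- the inequality with cut-off
  have hn : ∀ n : ℕ, ∫ x, (χ n x * f x ^ 2) ^ 2 ≤ c * (2 * a + M / (n + 1) * b) ^ 2 := by
    intro n
    have hi : Integrable (fun x => 2 * (|f x| * h x) + M / (n + 1) * f x ^ 2) :=
      (hfh.const_mul _).add (hf.sq.integrable.const_mul _)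
    have := hS (fun x => χ n x * f x ^ 2) (fun x => 2 * (|f x| * h x) + M / (n + 1) * f x ^ 2)
      ((hχ1 n).mul (hf.sq.contDiff.of_le (by exact_mod_cast le_top))) ((hχc n).mul_right) ?_ hi
    · rw [integral_add (hfh.const_mul _) (hf.sq.integrable.const_mul _), integral_const_mul,
        integral_const_mul] at this
      exact this
    · intro x
      have d1 : DifferentiableAt ℝ (χ n) x := (hχ1 n).differentiable (by simp) x
      have d2 : HasFDerivAt (fun x => f x ^ 2) ((2 * f x) • fderiv ℝ f x) x := by
        have := (hf.differentiable x).hasFDerivAt.pow 2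
        simpa using this
      have d3 := (d1.hasFDerivAt.mul d2).fderiv
      have e : (χ n * fun x => f x ^ 2) = fun x => χ n x * f x ^ 2 := rfl
      rw [e] at d3
      rw [d3]
      refine (norm_add_le _ _).trans ?_
      simp only [norm_smul, Real.norm_eq_abs, abs_mul]
      have e1 := hχd n x
      have e2 := fderiv_norm_le f x
      have e3 := hχb n x
      rw [abs_of_nonneg e3.1, abs_of_nonneg (sq_nonneg (f x)), abs_of_nonneg (zero_le_two (α := ℝ))]
      have k1 : χ n x * (2 * |f x| * ‖fderiv ℝ f x‖) ≤ 1 * (2 * |f x| * h x) := by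
        gcongr
        · exact e3.2
      have k2 : f x ^ 2 * ‖fderiv ℝ (χ n) x‖ ≤ f x ^ 2 * (M / (n + 1)) := by gcongr
      linarith
  have hlim1 : Filter.Tendsto (fun n : ℕ => ∫ x, (χ n x * f x ^ 2) ^ 2) Filter.atTop
      (nhds (∫ x, f x ^ 4)) := by
    refine tendsto_integral_of_dominated_convergence (fun x => f x ^ 4) ?_ hf.pow4.integrable ?_ ?_
    · intro n
      exact (((hχ1 n).continuous.mul (hf.continuous.pow 2)).pow 2).aestronglyMeasurable
    · intro n
      refine Filter.Eventually.of_forall fun x => ?_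
      rw [Real.norm_of_nonneg (sq_nonneg _)]
      have e3 := hχb n x
      have : χ n x ^ 2 ≤ 1 := by nlinarith
      nlinarith [mul_nonneg (sub_nonneg.2 this) (sq_nonneg (f x ^ 2))]
    · refine Filter.Eventually.of_forall fun x => ?_
      have := (((hχt x).mul_const (f x ^ 2)).pow 2)
      convert this using 2
      ring
  have hlim2 : Filter.Tendsto (fun n : ℕ => c * (2 * a + M / (n + 1) * b) ^ 2) Filter.atTop
      (nhds (c * (2 * a + 0 * b) ^ 2)) := by
    have : Filter.Tendsto (fun n : ℕ => M / ((n:ℝ) + 1)) Filter.atTop (nhds 0) :=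
      tendsto_const_div_atTop_nhds_zero_nat M |>.comp (Filter.tendsto_add_atTop_nat 1) |>.congr
        (by intro n; simp)
    exact (((this.mul_const b).const_add _).pow 2).const_mul c
  have hfin := le_of_tendsto_of_tendsto' hlim1 hlim2 hn
  have hcs := cs_sq (f := fun x => |f x|) (g := h) hf.continuous.abs hhc
    (by simpa only [sq_abs] using hf.sq.integrable) hh2
  simp only [sq_abs] at hcs
  have hb0 : 0 ≤ b := integral_nonneg fun x => sq_nonneg _
  calc ∫ x, f x ^ 4 ≤ c * (2 * a + 0 * b) ^ 2 := hfin
    _ = c * 4 * a ^ 2 := by ring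
    _ ≤ c * 4 * (b * (2 * ∑ i, ∫ x, pd i f x ^ 2)) := by
        gcongr
        exact hcs.trans (by gcongr)
    _ = _ := by ring


theorem N2_le_of_sq_le {f : E2 → ℝ} {r : ℝ} (hr : 0 ≤ r) (h : ∫ x, f x ^ 2 ≤ r ^ 2) : N2 f ≤ r :=
  Real.sqrt_le_iff.2 ⟨hr, h⟩

/-- For a curl-free Schwartz field, the gradient is controlled by the divergence. -/
theorem divcurl {D : Fin 2 → E2 → ℝ} (hD : ∀ i, Sz (D i))
    (hc : ∀ i j x, pd i (D j) x = pd j (D i) x) (i j : Fin 2) :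
    ∫ x, pd i (D j) x ^ 2 ≤ ∫ x, (∑ m, pd m (D m) x) ^ 2 := by
  have h1 : ∀ a b : Fin 2, ∫ x, pd a (D b) x ^ 2 = ∫ x, pd a (D a) x * pd b (D b) x := by
    intro a b
    have : ∀ x, pd a (D b) x ^ 2 = pd b (D a) x * pd a (D b) x := by
      intro x; rw [hc b a]; ring
    simp_rw [this]
    exact ibp2 (hD a) (hD b) b a
  have h2 : ∫ x, (∑ m, pd m (D m) x) ^ 2 = ∑ a, ∑ b, ∫ x, pd a (D b) x ^ 2 := by
    have e : ∀ x, (∑ m, pd m (D m) x) ^ 2 = ∑ a, ∑ b, pd a (D a) x * pd b (D b) x := by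
      intro x; rw [sq, Finset.sum_mul_sum]
    simp_rw [e, h1]
    rw [integral_finsetSum _ fun a _ => integrable_finsetSum _ fun b _ =>
      (((hD a).pd a).mul ((hD b).pd b)).integrable]
    refine Finset.sum_congr rfl fun a _ => ?_
    rw [integral_finsetSum _ fun b _ => (((hD a).pd a).mul ((hD b).pd b)).integrable]
  rw [h2]
  have n0 : ∀ a b, 0 ≤ ∫ x, pd a (D b) x ^ 2 := fun a b => integral_nonneg fun _ => sq_nonneg _
  calc ∫ x, pd i (D j) x ^ 2 ≤ ∑ b, ∫ x, pd i (D b) x ^ 2 :=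
        Finset.single_le_sum (f := fun b => ∫ x, pd i (D b) x ^ 2) (fun b _ => n0 i b)
          (Finset.mem_univ j)
    _ ≤ _ := Finset.single_le_sum (f := fun a => ∑ b, ∫ x, pd a (D b) x ^ 2)
          (fun a _ => Finset.sum_nonneg fun b _ => n0 a b) (Finset.mem_univ i)

theorem hess_le {f : E2 → ℝ} (hf : Sz f) (i j : Fin 2) : N2 (pd i (pd j f)) ≤ N2 (lap f) :=
  Real.sqrt_le_sqrt (divcurl (D := fun j => pd j f) (fun j => hf.pd j)
    (fun a b x => pd_comm hf.contDiff a b x) i j)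

theorem interp {f : E2 → ℝ} (hf : Sz f) (i : Fin 2) : N2 (pd i f) ^ 2 ≤ N2 f * N2 (lap f) := by
  have h := ibp_lap hf hf
  have h1 : N2 (pd i f) ^ 2 ≤ ∑ i, ∫ x, pd i f x * pd i f x := by
    rw [N2_sq]
    simp_rw [← sq]
    exact Finset.single_le_sum (f := fun i => ∫ x, pd i f x ^ 2)
      (fun b _ => integral_nonneg fun _ => sq_nonneg _) (Finset.mem_univ i)
  have h2 := cs_N2 hf.lap hf
  rw [h] at h1
  have := neg_abs_le (∫ x, lap f x * f x)
  linarith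

structure Est (K W Z : ℝ) (f : E2 → ℝ) : Prop where
  sz : Sz f
  n0 : N2 f ≤ K
  n1 : ∀ i, N2 (pd i f) ≤ W
  n3 : ∀ i, N2 (lap (pd i f)) ≤ Z

/-- The Ladyzhenskaya constant. -/
def cL : ℝ := Classical.choose lady

theorem cL_nonneg : 0 ≤ cL := (Classical.choose_spec lady).1

theorem lady_N2 {f : E2 → ℝ} (hf : Sz f) :
    ∫ x, f x ^ 4 ≤ cL * (N2 f ^ 2 * ∑ i, N2 (pd i f) ^ 2) := by
  simp_rw [N2_sq]
  exact (Classical.choose_spec lady).2 f hf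

namespace Est

variable {K W Z : ℝ} {f : E2 → ℝ}

theorem n2 (h : Est K W Z f) (i j : Fin 2) : N2 (pd i (pd j f)) ^ 2 ≤ W * Z :=
  (interp (h.sz.pd j) i).trans
    (mul_le_mul (h.n1 j) (h.n3 j) (N2_nonneg _) ((N2_nonneg _).trans (h.n1 j)))

theorem n3' (h : Est K W Z f) (i j l : Fin 2) : N2 (pd i (pd j (pd l f))) ≤ Z :=
  (hess_le (h.sz.pd l) i j).trans (h.n3 l)

theorem q0 (h : Est K W Z f) : ∫ x, f x ^ 4 ≤ 2 * cL * K ^ 2 * W ^ 2 := by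
  have h0 : N2 f ^ 2 ≤ K ^ 2 := pow_le_pow_left₀ (N2_nonneg _) h.n0 2
  have h1 : ∑ i, N2 (pd i f) ^ 2 ≤ 2 * W ^ 2 := by
    rw [Fin.sum_univ_two]
    have a := pow_le_pow_left₀ (N2_nonneg _) (h.n1 0) 2
    have b := pow_le_pow_left₀ (N2_nonneg _) (h.n1 1) 2
    linarith
  calc _ ≤ _ := lady_N2 h.sz
    _ ≤ cL * (K ^ 2 * (2 * W ^ 2)) := by
      have := cL_nonneg
      gcongr
    _ = _ := by ring

theorem q1 (h : Est K W Z f) (i : Fin 2) : ∫ x, pd i f x ^ 4 ≤ 2 * cL * W ^ 3 * Z := by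
  have h0 : N2 (pd i f) ^ 2 ≤ W ^ 2 := pow_le_pow_left₀ (N2_nonneg _) (h.n1 i) 2
  have h1 : ∑ j, N2 (pd j (pd i f)) ^ 2 ≤ 2 * (W * Z) := by
    rw [Fin.sum_univ_two]
    linarith [h.n2 0 i, h.n2 1 i]
  calc _ ≤ _ := lady_N2 (h.sz.pd i)
    _ ≤ cL * (W ^ 2 * (2 * (W * Z))) := by
      have := cL_nonneg
      gcongr
    _ = _ := by ring

theorem q2 (h : Est K W Z f) (i j : Fin 2) :
    ∫ x, pd i (pd j f) x ^ 4 ≤ 2 * cL * W * Z ^ 3 := by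
  have h0 := h.n2 i j
  have hWZ := (sq_nonneg _).trans h0
  have h1 : ∑ l, N2 (pd l (pd i (pd j f))) ^ 2 ≤ 2 * Z ^ 2 := by
    rw [Fin.sum_univ_two]
    have a := pow_le_pow_left₀ (N2_nonneg _) (h.n3' 0 i j) 2
    have b := pow_le_pow_left₀ (N2_nonneg _) (h.n3' 1 i j) 2
    linarith
  calc _ ≤ _ := lady_N2 ((h.sz.pd j).pd i)
    _ ≤ cL * (W * Z * (2 * Z ^ 2)) := by
      have := cL_nonneg
      gcongr
    _ = _ := by ring

end Est

/-- Sums of absolute values of finitely many functions bounded in `L⁴`. -/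
theorem sum_abs_L4 {κ : Type*} [Fintype κ] {g : κ → E2 → ℝ} {B : ℝ} (hg : ∀ a, Sz (g a))
    (hB : ∀ a, ∫ x, g a x ^ 4 ≤ B) :
    Continuous (fun x => ∑ a, |g a x|) ∧ Integrable (fun x => (∑ a, |g a x|) ^ 4) ∧
      ∫ x, (∑ a, |g a x|) ^ 4 ≤ (Fintype.card κ : ℝ) ^ 4 * B := by
  have hc : Continuous (fun x => ∑ a, |g a x|) :=
    continuous_finsetSum _ fun a _ => (hg a).continuous.abs
  have hle : ∀ x, (∑ a, |g a x|) ^ 4 ≤ (Fintype.card κ : ℝ) ^ 3 * ∑ a, g a x ^ 4 := by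
    intro x
    have h := pow_sum_le_card_mul_sum_pow (s := Finset.univ) (f := fun a => |g a x|)
      (fun _ _ => abs_nonneg _) 3
    have e : ∀ a, |g a x| ^ 4 = g a x ^ 4 := fun a => Even.pow_abs (by decide) _
    simpa [e] using h
  have hI : Integrable (fun x => (Fintype.card κ : ℝ) ^ 3 * ∑ a, g a x ^ 4) :=
    (integrable_finsetSum _ fun a _ => (hg a).pow4.integrable).const_mul _
  have hI2 : Integrable (fun x => (∑ a, |g a x|) ^ 4) := by
    refine hI.mono' (hc.pow 4).aestronglyMeasurable (Filter.Eventually.of_forall fun x => ?_)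
    rw [Real.norm_of_nonneg (by positivity)]
    exact hle x
  refine ⟨hc, hI2, (integral_mono hI2 hI hle).trans ?_⟩
  rw [integral_const_mul, integral_finsetSum _ fun a _ => (hg a).pow4.integrable]
  have : ∑ a, ∫ x, g a x ^ 4 ≤ Fintype.card κ * B := by
    simpa using Finset.sum_le_sum fun a (_ : a ∈ Finset.univ) => hB a
  calc _ ≤ (Fintype.card κ : ℝ) ^ 3 * (Fintype.card κ * B) := by gcongr
    _ = _ := by ring

theorem young1 {A ε : ℝ} (hA : 0 ≤ A) (hε : 0 < ε) : ∃ C : ℝ, 0 ≤ C ∧ ∀ W Z t : ℝ, 0 ≤ W → 0 ≤ Z →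
    t ^ 2 ≤ A * W ^ 3 * Z ^ 3 → t ≤ ε * Z ^ 2 + C * W ^ 6 := by
  refine ⟨A * (A + 1) / (8 * ε ^ 3), by positivity, ?_⟩
  intro W Z t hW hZ h
  refine abs_le_of_sq_le_sq' (h.trans ?_) (by positivity) |>.2
  have hd : 0 < 2 * ε ^ 2 / (A + 1) := by positivity
  set δ := 2 * ε ^ 2 / (A + 1) with hδ
  have hδA : A * δ / 2 ≤ ε ^ 2 := by
    rw [hδ]; field_simp; nlinarith
  have hC : A * (A + 1) / (8 * ε ^ 3) = A / (4 * ε * δ) := by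
    rw [hδ]; field_simp; ring
  rw [hC]
  have h1 : W ^ 3 * Z ≤ (δ * Z ^ 2 + W ^ 6 / δ) / 2 := by
    have : 0 ≤ (δ * Z - W ^ 3) ^ 2 / δ := by positivity
    have e : (δ * Z - W ^ 3) ^ 2 / δ = δ * Z ^ 2 + W ^ 6 / δ - 2 * (W ^ 3 * Z) := by
      field_simp; ring
    linarith
  calc A * W ^ 3 * Z ^ 3 = A * Z ^ 2 * (W ^ 3 * Z) := by ring
    _ ≤ A * Z ^ 2 * ((δ * Z ^ 2 + W ^ 6 / δ) / 2) := by gcongr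
    _ = (A * δ / 2) * (Z ^ 2) ^ 2 + 2 * ε * Z ^ 2 * (A / (4 * ε * δ) * W ^ 6) := by
        field_simp; ring
    _ ≤ ε ^ 2 * (Z ^ 2) ^ 2 + 2 * ε * Z ^ 2 * (A / (4 * ε * δ) * W ^ 6) := by gcongr
    _ ≤ _ := by nlinarith [sq_nonneg (A / (4 * ε * δ) * W ^ 6)]

theorem young2 {A ε : ℝ} (hε : 0 < ε) (W Z t : ℝ)
    (h : t ≤ A * W ^ 3 * Z) : t ≤ ε * Z ^ 2 + A ^ 2 / (4 * ε) * W ^ 6 := by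
  refine h.trans ?_
  have : 0 ≤ (2 * ε * Z - A * W ^ 3) ^ 2 / (4 * ε) := by positivity
  have e : (2 * ε * Z - A * W ^ 3) ^ 2 / (4 * ε)
      = ε * Z ^ 2 + A ^ 2 / (4 * ε) * W ^ 6 - A * W ^ 3 * Z := by
    field_simp; ring
  linarith

section fields

variable {ι : Type*} [Fintype ι] (f : ι → E2 → ℝ)

def p0 (x : E2) : ℝ := ∑ a, |f a x|

def p1 (x : E2) : ℝ := ∑ a : ι × Fin 2, |pd a.2 (f a.1) x|

def p2 (x : E2) : ℝ := ∑ a : ι × Fin 2 × Fin 2, |pd a.2.1 (pd a.2.2 (f a.1)) x|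

def pG (x : E2) : ℝ := p0 f x * p2 f x + p1 f x ^ 2

theorem p0_nonneg (x : E2) : 0 ≤ p0 f x := Finset.sum_nonneg fun _ _ => abs_nonneg _
theorem p1_nonneg (x : E2) : 0 ≤ p1 f x := Finset.sum_nonneg fun _ _ => abs_nonneg _
theorem p2_nonneg (x : E2) : 0 ≤ p2 f x := Finset.sum_nonneg fun _ _ => abs_nonneg _
theorem pG_nonneg (x : E2) : 0 ≤ pG f x :=
  add_nonneg (mul_nonneg (p0_nonneg f x) (p2_nonneg f x)) (sq_nonneg _)

theorem le_p0 (a : ι) (x : E2) : |f a x| ≤ p0 f x :=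
  Finset.single_le_sum (f := fun a => |f a x|) (fun _ _ => abs_nonneg _) (Finset.mem_univ a)

theorem le_p1 (a : ι) (i : Fin 2) (x : E2) : |pd i (f a) x| ≤ p1 f x :=
  Finset.single_le_sum (f := fun a : ι × Fin 2 => |pd a.2 (f a.1) x|) (fun _ _ => abs_nonneg _)
    (Finset.mem_univ (a, i))

theorem le_p2 (a : ι) (i j : Fin 2) (x : E2) : |pd i (pd j (f a)) x| ≤ p2 f x :=
  Finset.single_le_sum (f := fun a : ι × Fin 2 × Fin 2 => |pd a.2.1 (pd a.2.2 (f a.1)) x|)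
    (fun _ _ => abs_nonneg _) (Finset.mem_univ (a, i, j))

end fields

theorem pG_bound (ι : Type*) [Fintype ι] (K : ℝ) {ε : ℝ} (hε : 0 < ε) :
    ∃ C : ℝ, 0 ≤ C ∧ ∀ (W Z : ℝ) (f : ι → E2 → ℝ), 0 ≤ W → 0 ≤ Z → (∀ a, Est K W Z (f a)) →
      Continuous (pG f) ∧ Integrable (fun x => pG f x ^ 2) ∧
      ∫ x, pG f x ^ 2 ≤ ε * Z ^ 2 + C * W ^ 6 := by
  have hcL := cL_nonneg
  set A0 : ℝ := (Fintype.card ι : ℝ) ^ 4 * (2 * cL * K ^ 2) with hA0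
  set A1 : ℝ := (Fintype.card (ι × Fin 2) : ℝ) ^ 4 * (2 * cL) with hA1
  set A2 : ℝ := (Fintype.card (ι × Fin 2 × Fin 2) : ℝ) ^ 4 * (2 * cL) with hA2
  obtain ⟨C1, hC1, hY1⟩ := young1 (A := A0 * A2) (ε := ε / 4) (by positivity) (by positivity)
  refine ⟨2 * C1 + 2 * (A1 ^ 2 / (4 * (ε / 4))), by positivity, ?_⟩
  intro W Z f hW hZ hf
  obtain ⟨c0, i0, b0⟩ := sum_abs_L4 (g := f) (fun a => (hf a).sz) (fun a => (hf a).q0)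
  obtain ⟨c1, i1, b1⟩ := sum_abs_L4 (g := fun a : ι × Fin 2 => pd a.2 (f a.1))
    (fun a => (hf a.1).sz.pd _) (fun a => (hf a.1).q1 a.2)
  obtain ⟨c2, i2, b2⟩ := sum_abs_L4 (g := fun a : ι × Fin 2 × Fin 2 => pd a.2.1 (pd a.2.2 (f a.1)))
    (fun a => ((hf a.1).sz.pd _).pd _) (fun a => (hf a.1).q2 a.2.1 a.2.2)
  change Continuous (p0 f) at c0
  change Continuous (p1 f) at c1
  change Continuous (p2 f) at c2
  change Integrable (fun x => p0 f x ^ 4) at i0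
  change Integrable (fun x => p1 f x ^ 4) at i1
  change Integrable (fun x => p2 f x ^ 4) at i2
  change ∫ x, p0 f x ^ 4 ≤ _ at b0
  change ∫ x, p1 f x ^ 4 ≤ _ at b1
  change ∫ x, p2 f x ^ 4 ≤ _ at b2
  have cG : Continuous (pG f) := (c0.mul c2).add (c1.pow 2)
  have e4 : ∀ (q : E2 → ℝ), (fun x => (q x ^ 2) ^ 2) = fun x => q x ^ 4 := by
    intro q; funext x; ring
  have hcs := cs_sq (f := fun x => p0 f x ^ 2) (g := fun x => p2 f x ^ 2) (c0.pow 2) (c2.pow 2)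
    (by rw [e4]; exact i0) (by rw [e4]; exact i2)
  rw [e4, e4] at hcs
  have i02 : Integrable (fun x => p0 f x ^ 2 * p2 f x ^ 2) := by
    refine (i0.add i2).mono' ((c0.pow 2).mul (c2.pow 2)).aestronglyMeasurable
      (Filter.Eventually.of_forall fun x => ?_)
    rw [Real.norm_of_nonneg (by positivity)]
    simp only [Pi.add_apply]
    nlinarith [sq_nonneg (p0 f x ^ 2 - p2 f x ^ 2), sq_nonneg (p0 f x ^ 2), sq_nonneg (p2 f x ^ 2)]
  have hle : ∀ x, pG f x ^ 2 ≤ 2 * (p0 f x ^ 2 * p2 f x ^ 2) + 2 * p1 f x ^ 4 := by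
    intro x
    unfold pG
    nlinarith [sq_nonneg (p0 f x * p2 f x - p1 f x ^ 2)]
  have iR : Integrable (fun x => 2 * (p0 f x ^ 2 * p2 f x ^ 2) + 2 * p1 f x ^ 4) :=
    (i02.const_mul _).add (i1.const_mul _)
  have iG : Integrable (fun x => pG f x ^ 2) := by
    refine iR.mono' (cG.pow 2).aestronglyMeasurable (Filter.Eventually.of_forall fun x => ?_)
    rw [Real.norm_of_nonneg (by positivity)]
    exact hle x
  refine ⟨cG, iG, (integral_mono iG iR hle).trans ?_⟩
  rw [integral_add (i02.const_mul _) (i1.const_mul _), integral_const_mul, integral_const_mul]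
  have y1 := hY1 W Z (∫ x, p0 f x ^ 2 * p2 f x ^ 2) hW hZ (hcs.trans (by
    calc _ ≤ ((Fintype.card ι : ℝ) ^ 4 * (2 * cL * K ^ 2 * W ^ 2)) *
          ((Fintype.card (ι × Fin 2 × Fin 2) : ℝ) ^ 4 * (2 * cL * W * Z ^ 3)) := by
          refine mul_le_mul b0 b2 (integral_nonneg fun x => ?_) (by positivity)
          change 0 ≤ p2 f x ^ 4
          positivity
      _ = _ := by rw [hA0, hA2]; ring))
  have y2 := young2 (A := A1) (ε := ε / 4) (by positivity) W Z (∫ x, p1 f x ^ 4) (b1.trans (by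
    rw [hA1]; exact le_of_eq (by ring)))
  linarith


section pointwise

variable {ι : Type*} [Fintype ι] {f : ι → E2 → ℝ}

theorem bd_prod1 (hf : ∀ a, Sz (f a)) (a b : ι) (i l : Fin 2) (x : E2) :
    |pd l (fun y => f a y * pd i (f b) y) x| ≤ pG f x := by
  rw [pd_mul (hf a).differentiable ((hf b).pd i).differentiable]
  refine (abs_add_le _ _).trans ?_
  rw [abs_mul, abs_mul]
  have h1 := mul_le_mul (le_p1 f a l x) (le_p1 f b i x) (abs_nonneg _) (p1_nonneg f x)
  have h2 := mul_le_mul (le_p0 f a x) (le_p2 f b l i x) (abs_nonneg _) (p0_nonneg f x)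
  unfold pG
  nlinarith

theorem bd_prod2 (hf : ∀ a, Sz (f a)) (a b : ι) (i l : Fin 2) (x : E2) :
    |pd l (pd i (fun y => f a y * f b y)) x| ≤ 2 * pG f x := by
  have e : pd i (fun y => f a y * f b y) = fun y => f b y * pd i (f a) y + f a y * pd i (f b) y := by
    funext y
    rw [pd_mul (hf a).differentiable (hf b).differentiable]
    ring
  rw [e, pd_add ((hf b).mul ((hf a).pd i)).differentiable ((hf a).mul ((hf b).pd i)).differentiable]
  refine (abs_add_le _ _).trans ?_
  linarith [bd_prod1 hf a b i l x, bd_prod1 hf b a i l x]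

end pointwise

theorem abs_sum_le_card {κ : Type*} [Fintype κ] {g : κ → ℝ} {B : ℝ} (h : ∀ a, |g a| ≤ B) :
    |∑ a, g a| ≤ Fintype.card κ * B := by
  refine (Finset.abs_sum_le_sum_abs _ _).trans ?_
  simpa using Finset.sum_le_sum fun a (_ : a ∈ Finset.univ) => h a

abbrev Idx : Type := Fin 2 ⊕ (Fin 2 × Fin 3)

/-- The fields: velocity components and director gradient components. -/
def fl (u : Fin 2 → E2 → ℝ) (d : Fin 3 → E2 → ℝ) : Idx → E2 → ℝ
  | Sum.inl j => u j
  | Sum.inr p => pd p.1 (d p.2)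

/-- The nonlinear terms in the momentum equation. -/
def Nl (u : Fin 2 → E2 → ℝ) (d : Fin 3 → E2 → ℝ) (j : Fin 2) (x : E2) : ℝ :=
  (∑ i, u i x * pd i (u j) x) + ∑ i, pd i (fun y => ∑ k : Fin 3, pd i (d k) y * pd j (d k) y) x

/-- The transport term of the director equation. -/
def Tr (u : Fin 2 → E2 → ℝ) (d : Fin 3 → E2 → ℝ) (k : Fin 3) (x : E2) : ℝ :=
  ∑ i, u i x * pd i (d k) x

/-- `|∇d|²`. -/
def Qd (d : Fin 3 → E2 → ℝ) (x : E2) : ℝ := ∑ i, ∑ k : Fin 3, pd i (d k) x ^ 2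

/-- A snapshot of the solution at fixed time. -/
structure Snap (u V : Fin 2 → E2 → ℝ) (d F : Fin 3 → E2 → ℝ) (P : E2 → ℝ) : Prop where
  hu : ∀ j, Sz (u j)
  hV : ∀ j, Sz (V j)
  hd : ∀ k, ContDiff ℝ (⊤ : ℕ∞) (d k)
  hD : ∀ i k, Sz (pd i (d k))
  hF : ∀ k, ContDiff ℝ (⊤ : ℕ∞) (F k)
  hE : ∀ i k, Sz (pd i (F k))
  hP : ContDiff ℝ (⊤ : ℕ∞) P
  mom : ∀ x j, V j x - lap (u j) x + (∑ i, u i x * pd i (u j) x) + pd j P x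
    = - ∑ i, pd i (fun y => ∑ k : Fin 3, pd i (d k) y * pd j (d k) y) x
  dir : ∀ x k, F k x + ∑ i, u i x * pd i (d k) x = lap (d k) x + Qd d x * d k x
  div : ∀ x, ∑ i, pd i (u i) x = 0
  unit : ∀ x, ∑ k, d k x ^ 2 = 1

namespace Snap

variable {u V : Fin 2 → E2 → ℝ} {d F : Fin 3 → E2 → ℝ} {P : E2 → ℝ}

theorem hfl (S : Snap u V d F P) (a : Idx) : Sz (fl u d a) := by
  cases a with
  | inl j => exact S.hu j
  | inr p => exact S.hD p.1 p.2

theorem szN1 (S : Snap u V d F P) (j : Fin 2) : Sz (fun x => ∑ i, u i x * pd i (u j) x) :=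
  Sz.sum _ fun i => (S.hu i).mul ((S.hu j).pd i)

theorem szTau (S : Snap u V d F P) (i j : Fin 2) :
    Sz (fun y => ∑ k : Fin 3, pd i (d k) y * pd j (d k) y) :=
  Sz.sum _ fun k => (S.hD i k).mul (S.hD j k)

theorem szN2 (S : Snap u V d F P) (j : Fin 2) :
    Sz (fun x => ∑ i, pd i (fun y => ∑ k : Fin 3, pd i (d k) y * pd j (d k) y) x) :=
  Sz.sum _ fun i => (S.szTau i j).pd i

theorem szNl (S : Snap u V d F P) (j : Fin 2) : Sz (Nl u d j) := (S.szN1 j).add (S.szN2 j)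

theorem szTr (S : Snap u V d F P) (k : Fin 3) : Sz (Tr u d k) :=
  Sz.sum _ fun i => (S.hu i).mul (S.hD i k)

theorem szQd (S : Snap u V d F P) : Sz (Qd d) :=
  Sz.sum _ fun i => Sz.sum _ fun k => (S.hD i k).sq

theorem szlapd (S : Snap u V d F P) (k : Fin 3) : Sz (lap (d k)) :=
  Sz.sum (f := fun i x => pd i (pd i (d k)) x) _ fun i => (S.hD i k).pd i

theorem szlapF (S : Snap u V d F P) (k : Fin 3) : Sz (lap (F k)) :=
  Sz.sum (f := fun i x => pd i (pd i (F k)) x) _ fun i => (S.hE i k).pd i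

theorem bdR (S : Snap u V d F P) (l j : Fin 2) (x : E2) :
    |pd l (Nl u d j) x| ≤ 14 * pG (fl u d) x := by
  have e : pd l (Nl u d j) x = (∑ i, pd l (fun y => u i y * pd i (u j) y) x)
      + ∑ i, ∑ k : Fin 3, pd l (pd i (fun y => pd i (d k) y * pd j (d k) y)) x := by
    unfold Nl
    rw [pd_add (S.szN1 j).differentiable (S.szN2 j).differentiable,
      pd_sum _ (fun i => ((S.hu i).mul ((S.hu j).pd i)).differentiable),
      pd_sum _ (fun i => ((S.szTau i j).pd i).differentiable)]
    congr 1
    refine Finset.sum_congr rfl fun i _ => ?_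
    have : pd i (fun y => ∑ k : Fin 3, pd i (d k) y * pd j (d k) y)
        = fun y => ∑ k : Fin 3, pd i (fun y => pd i (d k) y * pd j (d k) y) y := by
      funext y
      rw [pd_sum _ (fun k => ((S.hD i k).mul (S.hD j k)).differentiable)]
    rw [this, pd_sum _ (fun k => (((S.hD i k).mul (S.hD j k)).pd i).differentiable)]
  rw [e]
  have h1 : |∑ i, pd l (fun y => u i y * pd i (u j) y) x| ≤ 2 * pG (fl u d) x := by
    have := abs_sum_le_card fun i =>
      bd_prod1 (f := fl u d) S.hfl (Sum.inl i) (Sum.inl j) i l x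
    simp only [Fintype.card_fin, Nat.cast_ofNat, fl] at this
    exact this
  have h2 : |∑ i, ∑ k : Fin 3, pd l (pd i (fun y => pd i (d k) y * pd j (d k) y)) x|
      ≤ 2 * (3 * (2 * pG (fl u d) x)) := by
    have := abs_sum_le_card fun i : Fin 2 => abs_sum_le_card fun k : Fin 3 =>
      bd_prod2 (f := fl u d) S.hfl (Sum.inr (i, k)) (Sum.inr (j, k)) i l x
    simp only [Fintype.card_fin, Nat.cast_ofNat, fl] at this
    exact this
  refine (abs_add_le _ _).trans ?_
  linarith

theorem abs_d_le (S : Snap u V d F P) (k : Fin 3) (x : E2) : |d k x| ≤ 1 := by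
  have h := S.unit x
  have : d k x ^ 2 ≤ 1 := by
    rw [← h]
    exact Finset.single_le_sum (f := fun k => d k x ^ 2) (fun _ _ => sq_nonneg _)
      (Finset.mem_univ k)
  exact abs_le_one_iff_mul_self_le_one.2 (by nlinarith)

/-- `|∇d|² = - d·Δd ≤ ∑ |Δd|`. -/
theorem Qd_le (S : Snap u V d F P) (x : E2) : Qd d x ≤ 6 * p1 (fl u d) x := by
  have hdd : ∀ k, Differentiable ℝ (d k) := fun k => (S.hd k).differentiable (by simp)
  have h1 : ∀ i y, ∑ k, d k y * pd i (d k) y = 0 := by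
    intro i y
    have a : pd i (fun y => ∑ k, d k y * d k y) y = 0 := by
      have : (fun y => ∑ k, d k y * d k y) = fun _ => (1:ℝ) := by
        funext y; rw [← S.unit y]; exact Finset.sum_congr rfl fun k _ => by ring
      rw [this]; simp [pd]
    rw [pd_sum _ (fun k => (hdd k).fun_mul (hdd k))] at a
    have b : ∀ k, pd i (fun y => d k y * d k y) y = 2 * (d k y * pd i (d k) y) := by
      intro k; rw [pd_mul (hdd k) (hdd k)]; ring
    simp_rw [b, ← Finset.mul_sum] at a
    linarith
  have h2 : ∀ i, ∑ k, pd i (d k) x ^ 2 = - ∑ k, d k x * pd i (pd i (d k)) x := by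
    intro i
    have a : pd i (fun y => ∑ k, d k y * pd i (d k) y) x = 0 := by
      have : (fun y => ∑ k, d k y * pd i (d k) y) = fun _ => (0:ℝ) := funext (h1 i)
      rw [this]; simp [pd]
    rw [pd_sum _ (fun k => (hdd k).fun_mul (S.hD i k).differentiable)] at a
    have b : ∀ k, pd i (fun y => d k y * pd i (d k) y) x
        = pd i (d k) x ^ 2 + d k x * pd i (pd i (d k)) x := by
      intro k; rw [pd_mul (hdd k) (S.hD i k).differentiable]; ring
    simp_rw [b, Finset.sum_add_distrib] at a
    linarith
  unfold Qd
  simp_rw [h2]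
  refine (le_abs_self _).trans ?_
  have := abs_sum_le_card (g := fun i : Fin 2 => - ∑ k, d k x * pd i (pd i (d k)) x)
    (B := 3 * p1 (fl u d) x) (fun i => by
      rw [abs_neg]
      have := abs_sum_le_card (g := fun k : Fin 3 => d k x * pd i (pd i (d k)) x)
        (B := p1 (fl u d) x) (fun k => by
          rw [abs_mul]
          have h3 := le_p1 (fl u d) (Sum.inr (i, k)) i x
          have h4 := S.abs_d_le k x
          have h5 := abs_nonneg (pd i (pd i (d k)) x)
          change |pd i (pd i (d k)) x| ≤ _ at h3
          nlinarith)
      simpa using this)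
  simp only [Fintype.card_fin, Nat.cast_ofNat] at this
  linarith

theorem D_mul_le (d : Fin 3 → E2 → ℝ) (i l : Fin 2) (k m : Fin 3) (x : E2) :
    |pd i (d k) x| * |pd l (d m) x| ≤ Qd d x := by
  have h : ∀ i k, pd i (d k) x ^ 2 ≤ Qd d x := fun i k =>
    (Finset.single_le_sum (f := fun k => pd i (d k) x ^ 2) (fun _ _ => sq_nonneg _)
      (Finset.mem_univ k)).trans
    (Finset.single_le_sum (f := fun i => ∑ k, pd i (d k) x ^ 2)
      (fun _ _ => Finset.sum_nonneg fun _ _ => sq_nonneg _) (Finset.mem_univ i))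
  nlinarith [h i k, h l m, sq_nonneg (|pd i (d k) x| - |pd l (d m) x|), sq_abs (pd i (d k) x),
    sq_abs (pd l (d m) x)]

theorem bdS1 (S : Snap u V d F P) (k : Fin 3) (x : E2) :
    |lap (Tr u d k) x| ≤ 8 * pG (fl u d) x := by
  have e : lap (Tr u d k) x = ∑ l, ∑ i, pd l (pd l (fun y => u i y * pd i (d k) y)) x := by
    rw [lap_eq]
    refine Finset.sum_congr rfl fun l _ => ?_
    have : pd l (Tr u d k) = fun y => ∑ i, pd l (fun y => u i y * pd i (d k) y) y := by
      funext y
      exact pd_sum _ (fun i => ((S.hu i).mul (S.hD i k)).differentiable) _ _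
    rw [this, pd_sum _ (fun i => (((S.hu i).mul (S.hD i k)).pd l).differentiable)]
  rw [e]
  have := abs_sum_le_card fun l : Fin 2 => abs_sum_le_card fun i : Fin 2 =>
      bd_prod2 (f := fl u d) S.hfl (Sum.inl i) (Sum.inr (i, k)) l l x
  simp only [Fintype.card_fin, Nat.cast_ofNat, fl] at this
  linarith

theorem pdQd (S : Snap u V d F P) (l : Fin 2) (x : E2) :
    pd l (Qd d) x = ∑ i, ∑ m : Fin 3, 2 * (pd i (d m) x * pd l (pd i (d m)) x) := by
  unfold Qd
  rw [pd_sum _ (fun i => (Sz.sum _ fun k => (S.hD i k).sq).differentiable)]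
  refine Finset.sum_congr rfl fun i _ => ?_
  rw [pd_sum _ (fun k => ((S.hD i k).sq).differentiable)]
  refine Finset.sum_congr rfl fun m _ => ?_
  have : (fun y => pd i (d m) y ^ 2) = fun y => pd i (d m) y * pd i (d m) y := by
    funext y; ring
  rw [this, pd_mul (S.hD i m).differentiable (S.hD i m).differentiable]
  ring

theorem bd_ppQd (S : Snap u V d F P) (l : Fin 2) (x : E2) :
    |pd l (pd l (Qd d)) x| ≤ 12 * pG (fl u d) x := by
  have e : pd l (pd l (Qd d)) x
      = ∑ i, ∑ m : Fin 3, pd l (pd l (fun y => pd i (d m) y * pd i (d m) y)) x := by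
    have e1 : Qd d = fun x => ∑ i, ∑ m : Fin 3, pd i (d m) x * pd i (d m) x := by
      funext y; unfold Qd; simp_rw [sq]
    have e2 : pd l (Qd d) = fun x => ∑ i, ∑ m : Fin 3,
        pd l (fun y => pd i (d m) y * pd i (d m) y) x := by
      funext y
      rw [e1, pd_sum _ (fun i => (Sz.sum _ fun k => (S.hD i k).mul (S.hD i k)).differentiable)]
      refine Finset.sum_congr rfl fun i _ => ?_
      rw [pd_sum _ (fun k => ((S.hD i k).mul (S.hD i k)).differentiable)]
    rw [e2, pd_sum _ (fun i => (Sz.sum _ fun k =>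
      ((S.hD i k).mul (S.hD i k)).pd l).differentiable)]
    refine Finset.sum_congr rfl fun i _ => ?_
    rw [pd_sum _ (fun k => (((S.hD i k).mul (S.hD i k)).pd l).differentiable)]
  rw [e]
  have := abs_sum_le_card fun i : Fin 2 => abs_sum_le_card fun m : Fin 3 =>
      bd_prod2 (f := fl u d) S.hfl (Sum.inr (i, m)) (Sum.inr (i, m)) l l x
  simp only [Fintype.card_fin, Nat.cast_ofNat, fl] at this
  linarith

theorem bdS2 (S : Snap u V d F P) (k : Fin 3) (x : E2) :
    |lap (fun y => Qd d y * d k y) x| ≤ 324 * pG (fl u d) x := by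
  have hdd : Differentiable ℝ (d k) := (S.hd k).differentiable (by simp)
  have hQ := S.szQd
  have hp1 : p1 (fl u d) x ^ 2 ≤ pG (fl u d) x := by
    unfold pG
    nlinarith [mul_nonneg (p0_nonneg (fl u d) x) (p2_nonneg (fl u d) x)]
  have hp1n := p1_nonneg (fl u d) x
  have hQl := S.Qd_le x
  have hQ0 : 0 ≤ Qd d x :=
    Finset.sum_nonneg fun _ _ => Finset.sum_nonneg fun _ _ => sq_nonneg _
  have key : ∀ l, |pd l (pd l (fun y => Qd d y * d k y)) x| ≤ 162 * pG (fl u d) x := by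
    intro l
    have e1 : pd l (fun y => Qd d y * d k y)
        = fun y => pd l (Qd d) y * d k y + Qd d y * pd l (d k) y := by
      funext y
      rw [pd_mul hQ.differentiable hdd]
    have e2 : pd l (pd l (fun y => Qd d y * d k y)) x = pd l (pd l (Qd d)) x * d k x
        + 2 * (pd l (Qd d) x * pd l (d k) x) + Qd d x * pd l (pd l (d k)) x := by
      rw [e1, pd_add ((hQ.pd l).differentiable.fun_mul hdd) (hQ.mul (S.hD l k)).differentiable,
        pd_mul (hQ.pd l).differentiable hdd, pd_mul hQ.differentiable (S.hD l k).differentiable]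
      ring
    have b1 : |pd l (pd l (Qd d)) x * d k x| ≤ 12 * pG (fl u d) x := by
      rw [abs_mul]
      nlinarith [S.bd_ppQd l x, S.abs_d_le k x, abs_nonneg (pd l (pd l (Qd d)) x),
        abs_nonneg (d k x)]
    have b2 : |pd l (Qd d) x * pd l (d k) x| ≤ 72 * pG (fl u d) x := by
      rw [S.pdQd, Finset.sum_mul]
      simp_rw [Finset.sum_mul]
      have := abs_sum_le_card fun i : Fin 2 => abs_sum_le_card fun m : Fin 3 =>
        (show |2 * (pd i (d m) x * pd l (pd i (d m)) x) * pd l (d k) x|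
          ≤ 12 * p1 (fl u d) x ^ 2 by
          have h1 := D_mul_le d i l m k x
          have h2 := le_p1 (fl u d) (Sum.inr (i, m)) l x
          change |pd l (pd i (d m)) x| ≤ _ at h2
          rw [abs_mul, abs_mul, abs_mul, abs_of_nonneg (zero_le_two (α := ℝ))]
          calc 2 * (|pd i (d m) x| * |pd l (pd i (d m)) x|) * |pd l (d k) x|
              = 2 * (|pd i (d m) x| * |pd l (d k) x|) * |pd l (pd i (d m)) x| := by ring
            _ ≤ 2 * (6 * p1 (fl u d) x) * p1 (fl u d) x := by
                gcongr 2 * ?_ * ?_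
                exact h1.trans hQl
            _ = _ := by ring)
      simp only [Fintype.card_fin, Nat.cast_ofNat] at this
      linarith
    have b3 : |Qd d x * pd l (pd l (d k)) x| ≤ 6 * pG (fl u d) x := by
      have h2 := le_p1 (fl u d) (Sum.inr (l, k)) l x
      change |pd l (pd l (d k)) x| ≤ _ at h2
      rw [abs_mul, abs_of_nonneg hQ0]
      calc Qd d x * |pd l (pd l (d k)) x| ≤ 6 * p1 (fl u d) x * p1 (fl u d) x := by gcongr
        _ ≤ _ := by nlinarith
    rw [e2]
    refine (abs_add_le _ _).trans ?_
    have := abs_add_le (pd l (pd l (Qd d)) x * d k x) (2 * (pd l (Qd d) x * pd l (d k) x))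
    rw [abs_mul 2, abs_of_nonneg (zero_le_two (α := ℝ))] at this
    linarith
  have := abs_sum_le_card key
  simp only [Fintype.card_fin, Nat.cast_ofNat] at this
  rw [lap_eq]
  dsimp only
  linarith

end Snap


theorem absorb {a b G : E2 → ℝ} {c : ℝ} (ha : Sz a) (hb : Sz b) (hG : Integrable (fun x => G x ^ 2))
    (h : ∀ x, |b x| ≤ c * G x) :
    ∫ x, a x * b x ≤ 1 / 4 * (∫ x, a x ^ 2) + c ^ 2 * ∫ x, G x ^ 2 := by
  have hR : Integrable (fun x => 1 / 4 * a x ^ 2 + c ^ 2 * G x ^ 2) :=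
    (ha.sq.integrable.const_mul _).add (hG.const_mul _)
  have hle : ∀ x, a x * b x ≤ 1 / 4 * a x ^ 2 + c ^ 2 * G x ^ 2 := by
    intro x
    have h1 : b x ^ 2 ≤ (c * G x) ^ 2 := sq_le_sq' (abs_le.1 (h x)).1 (abs_le.1 (h x)).2
    nlinarith [sq_nonneg (a x / 2 - b x)]
  refine (integral_mono (ha.mul hb).integrable hR hle).trans (le_of_eq ?_)
  rw [integral_add (ha.sq.integrable.const_mul _) (hG.const_mul _), integral_const_mul,
    integral_const_mul]

namespace Snap

variable {u V : Fin 2 → E2 → ℝ} {d F : Fin 3 → E2 → ℝ} {P : E2 → ℝ}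

theorem V_eq (S : Snap u V d F P) (j : Fin 2) :
    V j = fun x => lap (u j) x - Nl u d j x - pd j P x := by
  funext x
  have := S.mom x j
  unfold Nl
  linarith

theorem szPi (S : Snap u V d F P) (j : Fin 2) : Sz (pd j P) := by
  refine (((S.hu j).lap.sub (S.szNl j)).sub (S.hV j)).congr fun x => ?_
  rw [S.V_eq j]
  ring

theorem lapF_eq (S : Snap u V d F P) (k : Fin 3) (x : E2) :
    lap (F k) x = lap (lap (d k)) x - (lap (Tr u d k) x - lap (fun y => Qd d y * d k y) x) := by
  have hdd : Differentiable ℝ (d k) := (S.hd k).differentiable (by simp)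
  have c2 : ContDiff ℝ (⊤ : ℕ∞) (fun y => Qd d y * d k y) := S.szQd.contDiff.mul (S.hd k)
  have e : F k = fun x => (lap (d k) x - Tr u d k x) + Qd d x * d k x := by
    funext x
    have := S.dir x k
    unfold Tr
    linarith
  have e1 : ∀ i, pd i (F k) = fun x => (pd i (lap (d k)) x - pd i (Tr u d k) x)
      + pd i (fun y => Qd d y * d k y) x := by
    intro i
    funext x
    rw [e, pd_add ((S.szlapd k).sub (S.szTr k)).differentiable (c2.differentiable (by simp)),
      pd_sub (S.szlapd k).differentiable (S.szTr k).differentiable]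
  have e2 : ∀ i, pd i (pd i (F k)) x = (pd i (pd i (lap (d k))) x - pd i (pd i (Tr u d k)) x)
      + pd i (pd i (fun y => Qd d y * d k y)) x := by
    intro i
    rw [e1, pd_add (((S.szlapd k).pd i).sub ((S.szTr k).pd i)).differentiable
      (pd_differentiable c2 i),
      pd_sub ((S.szlapd k).pd i).differentiable ((S.szTr k).pd i).differentiable]
  rw [lap_eq (F k)]
  simp only [e2, Finset.sum_add_distrib, Finset.sum_sub_distrib]
  simp only [lap_eq]
  ring

/-- The nonlinear term in the director equation. -/
theorem szS (S : Snap u V d F P) (k : Fin 3) :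
    Sz (fun x => lap (Tr u d k) x - lap (fun y => Qd d y * d k y) x) := by
  refine ((S.szlapd k).lap.sub (S.szlapF k)).congr fun x => ?_
  rw [S.lapF_eq k x]
  ring

theorem energy_u (S : Snap u V d F P) :
    ∑ j, ∫ x, lap (u j) x * lap (V j) x = - (∑ l, ∑ j, ∫ x, pd l (lap (u j)) x ^ 2)
      + ∑ l, ∑ j, ∫ x, pd l (lap (u j)) x * pd l (Nl u d j) x := by
  have h1 : ∀ j, ∫ x, lap (u j) x * lap (V j) x
      = - ∑ l, ∫ x, pd l (V j) x * pd l (lap (u j)) x := by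
    intro j
    rw [ibp_lap (S.hV j) (S.hu j).lap, neg_neg]
    exact integral_congr_ae (Filter.Eventually.of_forall fun x => mul_comm _ _)
  have h2 : ∀ l j, ∫ x, pd l (V j) x * pd l (lap (u j)) x
      = (∫ x, pd l (lap (u j)) x ^ 2) - (∫ x, pd l (lap (u j)) x * pd l (Nl u d j) x)
        - ∫ x, pd l (pd l P) x * pd j (lap (u j)) x := by
    intro l j
    have hU := (S.hu j).lap.pd l
    have e : ∀ x, pd l (V j) x * pd l (lap (u j)) x
        = (pd l (lap (u j)) x ^ 2 - pd l (lap (u j)) x * pd l (Nl u d j) x)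
          - pd j (pd l P) x * pd l (lap (u j)) x := by
      intro x
      rw [S.V_eq j, pd_sub ((S.hu j).lap.sub (S.szNl j)).differentiable (S.szPi j).differentiable,
        pd_sub (S.hu j).lap.differentiable (S.szNl j).differentiable, pd_comm S.hP l j]
      ring
    simp_rw [e]
    rw [integral_sub (hU.sq.sub (hU.mul ((S.szNl j).pd l))).integrable
      (((S.szPi l).pd j).mul hU).integrable,
      integral_sub hU.sq.integrable (hU.mul ((S.szNl j).pd l)).integrable,
      ibp2 (S.szPi l) (S.hu j).lap j l]
  have h3 : ∀ l, ∑ j, ∫ x, pd l (pd l P) x * pd j (lap (u j)) x = 0 := by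
    intro l
    rw [← integral_finsetSum _ fun j _ => (((S.szPi l).pd l).mul ((S.hu j).lap.pd j)).integrable]
    have : ∀ x, ∑ j, pd l (pd l P) x * pd j (lap (u j)) x = 0 := by
      intro x
      rw [← Finset.mul_sum]
      have e1 : ∑ j, pd j (lap (u j)) x = lap (fun y => ∑ j, pd j (u j) y) x := by
        simp_rw [fun j => pd_lap (S.hu j).contDiff j]
        simp only [lap_eq]
        rw [Finset.sum_comm]
        refine Finset.sum_congr rfl fun i _ => ?_
        have : pd i (fun y => ∑ j, pd j (u j) y) = fun y => ∑ j, pd i (pd j (u j)) y := by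
          funext y
          rw [pd_sum _ (fun j => ((S.hu j).pd j).differentiable)]
        rw [this, pd_sum _ (fun j => (((S.hu j).pd j).pd i).differentiable)]
      have e2 : (fun y => ∑ j, pd j (u j) y) = fun _ => (0:ℝ) := funext S.div
      rw [e1, e2]
      simp [lap, pd]
    simp [this]
  simp_rw [h1, h2]
  rw [Finset.sum_neg_distrib, Finset.sum_comm]
  simp only [Finset.sum_sub_distrib, h3, Finset.sum_const_zero, sub_zero]
  ring

theorem energy_d (S : Snap u V d F P) :
    ∑ i, ∑ k, ∫ x, lap (pd i (d k)) x * lap (pd i (F k)) x = - (∑ k, ∫ x, lap (lap (d k)) x ^ 2)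
      + ∑ k, ∫ x, lap (lap (d k)) x
          * (lap (Tr u d k) x - lap (fun y => Qd d y * d k y) x) := by
  rw [Finset.sum_comm, ← Finset.sum_neg_distrib, ← Finset.sum_add_distrib]
  refine Finset.sum_congr rfl fun k _ => ?_
  simp_rw [← fun i => pd_lap (S.hd k) i, ← fun i => pd_lap (S.hF k) i]
  rw [ibp_lap (S.szlapd k) (S.szlapF k)]
  have e : ∀ x, lap (lap (d k)) x * lap (F k) x = lap (lap (d k)) x ^ 2
      - lap (lap (d k)) x * (lap (Tr u d k) x - lap (fun y => Qd d y * d k y) x) := by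
    intro x
    rw [S.lapF_eq k x]
    ring
  simp_rw [e]
  rw [integral_sub (S.szlapd k).lap.sq.integrable ((S.szlapd k).lap.mul (S.szS k)).integrable]
  ring

theorem energy (S : Snap u V d F P) (hG : Integrable (fun x => pG (fl u d) x ^ 2)) :
    2 * ((∑ j, ∫ x, lap (u j) x * lap (V j) x)
      + ∑ i, ∑ k, ∫ x, lap (pd i (d k)) x * lap (pd i (F k)) x)
    + 3 / 2 * ((∑ l, ∑ j, ∫ x, pd l (lap (u j)) x ^ 2) + ∑ k, ∫ x, lap (lap (d k)) x ^ 2)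
    ≤ 10 ^ 6 * ∫ x, pG (fl u d) x ^ 2 := by
  rw [S.energy_u, S.energy_d]
  set J := ∫ x, pG (fl u d) x ^ 2 with hJ
  have hJ0 : 0 ≤ J := integral_nonneg fun _ => sq_nonneg _
  have a1 : ∑ l, ∑ j, ∫ x, pd l (lap (u j)) x * pd l (Nl u d j) x
      ≤ 1 / 4 * (∑ l, ∑ j, ∫ x, pd l (lap (u j)) x ^ 2) + 4 * (14 ^ 2 * J) := by
    have : ∀ l ∈ (Finset.univ : Finset (Fin 2)), ∀ j ∈ (Finset.univ : Finset (Fin 2)),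
        ∫ x, pd l (lap (u j)) x * pd l (Nl u d j) x
        ≤ 1 / 4 * (∫ x, pd l (lap (u j)) x ^ 2) + 14 ^ 2 * J := fun l _ j _ =>
      absorb ((S.hu j).lap.pd l) ((S.szNl j).pd l) hG (S.bdR l j)
    have := Finset.sum_le_sum fun l hl => Finset.sum_le_sum (this l hl)
    simp only [Finset.sum_add_distrib, ← Finset.mul_sum, Finset.sum_const, Finset.card_univ,
      Fintype.card_fin, nsmul_eq_mul, Nat.cast_ofNat] at this
    linarith
  have a2 : ∑ k, ∫ x, lap (lap (d k)) x
          * (lap (Tr u d k) x - lap (fun y => Qd d y * d k y) x)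
      ≤ 1 / 4 * (∑ k, ∫ x, lap (lap (d k)) x ^ 2) + 3 * (332 ^ 2 * J) := by
    have : ∀ k ∈ (Finset.univ : Finset (Fin 3)), ∫ x, lap (lap (d k)) x
          * (lap (Tr u d k) x - lap (fun y => Qd d y * d k y) x)
        ≤ 1 / 4 * (∫ x, lap (lap (d k)) x ^ 2) + 332 ^ 2 * J := fun k _ =>
      absorb (S.szlapd k).lap (S.szS k) hG fun x => by
        refine (abs_sub _ _).trans ?_
        linarith [S.bdS1 k x, S.bdS2 k x]
    have := Finset.sum_le_sum this
    simp only [Finset.sum_add_distrib, ← Finset.mul_sum, Finset.sum_const, Finset.card_univ,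
      Fintype.card_fin, nsmul_eq_mul, Nat.cast_ofNat] at this
    linarith
  linarith

end Snap


section time

theorem slice_contDiff {f : ℝ → E2 → ℝ} (hf : ContDiff ℝ (⊤ : ℕ∞) (Function.uncurry f)) (t : ℝ) :
    ContDiff ℝ (⊤ : ℕ∞) (f t) :=
  hf.comp (contDiff_const.prodMk contDiff_id)

theorem hasFDerivAt_slice {f : ℝ → E2 → ℝ} (hf : ContDiff ℝ (⊤ : ℕ∞) (Function.uncurry f)) (t : ℝ)
    (x : E2) : HasFDerivAt (Function.uncurry f) (fderiv ℝ (Function.uncurry f) (t, x)) (t, x) :=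
  ((hf.differentiable (by simp)) (t, x)).hasFDerivAt

theorem pd_slice {f : ℝ → E2 → ℝ} (hf : ContDiff ℝ (⊤ : ℕ∞) (Function.uncurry f)) (i : Fin 2)
    (t : ℝ) (x : E2) :
    pd i (f t) x = fderiv ℝ (Function.uncurry f) (t, x) (0, EuclideanSpace.single i 1) := by
  have h : HasFDerivAt (f t) ((fderiv ℝ (Function.uncurry f) (t, x)).comp
      (ContinuousLinearMap.inr ℝ ℝ E2)) x :=
    HasFDerivAt.comp (g := Function.uncurry f) x (hasFDerivAt_slice hf t x)
      (hasFDerivAt_prodMk_right t x)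
  unfold pd
  rw [h.fderiv]
  rfl

theorem hasDerivAt_slice' {f : ℝ → E2 → ℝ} (hf : ContDiff ℝ (⊤ : ℕ∞) (Function.uncurry f))
    (t : ℝ) (x : E2) :
    HasDerivAt (fun s => f s x) (fderiv ℝ (Function.uncurry f) (t, x) (1, 0)) t := by
  have h : HasFDerivAt (fun s => f s x) ((fderiv ℝ (Function.uncurry f) (t, x)).comp
      (ContinuousLinearMap.inl ℝ ℝ E2)) t :=
    HasFDerivAt.comp (g := Function.uncurry f) (f := fun e => (e, x)) t (hasFDerivAt_slice hf t x)
      (hasFDerivAt_prodMk_left t x)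
  simpa using h.hasDerivAt

/-- Time derivative of a time dependent field. -/
def dt (f : ℝ → E2 → ℝ) (t : ℝ) (x : E2) : ℝ := deriv (fun s => f s x) t

theorem dt_eq {f : ℝ → E2 → ℝ} (hf : ContDiff ℝ (⊤ : ℕ∞) (Function.uncurry f))
    (t : ℝ) (x : E2) : dt f t x = fderiv ℝ (Function.uncurry f) (t, x) (1, 0) :=
  (hasDerivAt_slice' hf t x).deriv

theorem hasDerivAt_dt {f : ℝ → E2 → ℝ} (hf : ContDiff ℝ (⊤ : ℕ∞) (Function.uncurry f))
    (t : ℝ) (x : E2) : HasDerivAt (fun s => f s x) (dt f t x) t := by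
  rw [dt_eq hf]; exact hasDerivAt_slice' hf t x

theorem smooth_pd {f : ℝ → E2 → ℝ} (hf : ContDiff ℝ (⊤ : ℕ∞) (Function.uncurry f)) (i : Fin 2) :
    ContDiff ℝ (⊤ : ℕ∞) (Function.uncurry fun t => pd i (f t)) := by
  have : (Function.uncurry fun t => pd i (f t))
      = fun p => fderiv ℝ (Function.uncurry f) p (0, EuclideanSpace.single i 1) := by
    funext ⟨t, x⟩
    exact pd_slice hf i t x
  rw [this]
  exact (hf.fderiv_right (m := (⊤ : ℕ∞)) (by simp)).clm_apply contDiff_const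

theorem smooth_dt {f : ℝ → E2 → ℝ} (hf : ContDiff ℝ (⊤ : ℕ∞) (Function.uncurry f)) :
    ContDiff ℝ (⊤ : ℕ∞) (Function.uncurry (dt f)) := by
  have : (Function.uncurry (dt f)) = fun p => fderiv ℝ (Function.uncurry f) p (1, 0) := by
    funext ⟨t, x⟩
    exact dt_eq hf t x
  rw [this]
  exact (hf.fderiv_right (m := (⊤ : ℕ∞)) (by simp)).clm_apply contDiff_const

theorem dt_pd {f : ℝ → E2 → ℝ} (hf : ContDiff ℝ (⊤ : ℕ∞) (Function.uncurry f)) (i : Fin 2)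
    (t : ℝ) : dt (fun s => pd i (f s)) t = pd i (dt f t) := by
  funext x
  have hd : DifferentiableAt ℝ (fderiv ℝ (Function.uncurry f)) (t, x) :=
    ((hf.fderiv_right (m := (⊤ : ℕ∞)) (by simp)).differentiable (by simp)) _
  have e : ∀ v w : ℝ × E2, fderiv ℝ (fun p => fderiv ℝ (Function.uncurry f) p v) (t, x) w
      = fderiv ℝ (fderiv ℝ (Function.uncurry f)) (t, x) w v := by
    intro v w
    have := (hd.hasFDerivAt.clm_apply (hasFDerivAt_const v (t, x))).fderiv
    rw [this]
    simp
  have e1 : (Function.uncurry fun t => pd i (f t))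
      = fun p => fderiv ℝ (Function.uncurry f) p (0, EuclideanSpace.single i 1) := by
    funext ⟨t, x⟩
    exact pd_slice hf i t x
  have e2 : (Function.uncurry (dt f)) = fun p => fderiv ℝ (Function.uncurry f) p (1, 0) := by
    funext ⟨t, x⟩
    exact dt_eq hf t x
  rw [dt_eq (smooth_pd hf i), pd_slice (smooth_dt hf), e1, e2, e, e]
  have hs : IsSymmSndFDerivAt ℝ (Function.uncurry f) (t, x) :=
    (hf.contDiffAt).isSymmSndFDerivAt (by
      simpa using WithTop.coe_le_coe.2 (le_top : (2 : ℕ∞) ≤ ⊤))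
  exact hs.eq _ _

theorem smooth_lap {f : ℝ → E2 → ℝ} (hf : ContDiff ℝ (⊤ : ℕ∞) (Function.uncurry f)) :
    ContDiff ℝ (⊤ : ℕ∞) (Function.uncurry fun t => lap (f t)) := by
  have : (Function.uncurry fun t => lap (f t))
      = fun p => ∑ i, (Function.uncurry fun t => pd i (pd i (f t))) p := by
    funext ⟨t, x⟩
    rfl
  rw [this]
  exact ContDiff.sum fun i _ => smooth_pd (smooth_pd hf i) i

theorem dt_lap {f : ℝ → E2 → ℝ} (hf : ContDiff ℝ (⊤ : ℕ∞) (Function.uncurry f)) 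
    (t : ℝ) : dt (fun s => lap (f s)) t = lap (dt f t) := by
  funext x
  have h : ∀ i, HasDerivAt (fun s => pd i (pd i (f s)) x) (pd i (pd i (dt f t)) x) t := by
    intro i
    have := hasDerivAt_dt (smooth_pd (smooth_pd hf i) i) t x
    rwa [dt_pd (smooth_pd hf i), dt_pd hf] at this
  have := HasDerivAt.fun_sum fun i (_ : i ∈ Finset.univ) => h i
  exact this.deriv

theorem SF.pd {T : ℝ} {f : ℝ → E2 → ℝ} (hf : ContDiff ℝ (⊤ : ℕ∞) (Function.uncurry f))
    (h : SchwartzFamily T f) (i : Fin 2) : SchwartzFamily T (fun t => pd i (f t)) := by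
  intro t₀ ht₀ k l
  obtain ⟨ε, hε, C, hC⟩ := h t₀ ht₀ k (l + 1)
  refine ⟨ε, hε, C, fun t ht htt x => le_trans ?_ (hC t ht htt x)⟩
  gcongr
  rw [← norm_iteratedFDeriv_fderiv]
  have hs : ContDiff ℝ (⊤ : ℕ∞) (fderiv ℝ (f t)) := (slice_contDiff hf t).fderiv_right (by simp)
  have := norm_iteratedFDeriv_clm_apply_const (c := EuclideanSpace.single i (1:ℝ)) (n := l)
    (hs.contDiffAt (x := x)) (by exact_mod_cast le_top)
  simp only [EuclideanSpace.norm_single, norm_one, one_mul] at this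
  exact this

theorem SF.sz {T : ℝ} {f : ℝ → E2 → ℝ} (hf : ContDiff ℝ (⊤ : ℕ∞) (Function.uncurry f))
    (h : SchwartzFamily T f) {t : ℝ} (ht : t ∈ Set.Ioo (0:ℝ) T) : Sz (f t) := by
  refine ⟨⟨f t, slice_contDiff hf t, fun k l => ?_⟩, fun x => rfl⟩
  obtain ⟨ε, hε, C, hC⟩ := h t ht k l
  exact ⟨C, fun x => hC t ht (by simpa using hε) x⟩

theorem SF.bd {T : ℝ} {f : ℝ → E2 → ℝ} 
    (h : SchwartzFamily T f) {t : ℝ} (ht : t ∈ Set.Ioo (0:ℝ) T) (k : ℕ) :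
    ∃ ε > 0, ∃ C : ℝ, ∀ s ∈ Set.Ioo (0:ℝ) T, |s - t| < ε → ∀ x, ‖x‖ ^ k * |f s x| ≤ C := by
  obtain ⟨ε, hε, C, hC⟩ := h t ht k 0
  refine ⟨ε, hε, C, fun s hs hst x => ?_⟩
  simpa using hC s hs hst x

theorem SF.lap_bd {T : ℝ} {f : ℝ → E2 → ℝ} (hf : ContDiff ℝ (⊤ : ℕ∞) (Function.uncurry f))
    (h : SchwartzFamily T f) {t : ℝ} (ht : t ∈ Set.Ioo (0:ℝ) T) (k : ℕ) :
    ∃ ε > 0, ∃ C : ℝ, ∀ s ∈ Set.Ioo (0:ℝ) T, |s - t| < ε → ∀ x, ‖x‖ ^ k * |lap (f s) x| ≤ C := by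
  obtain ⟨ε, hε, C, hC⟩ := SF.bd (SF.pd (smooth_pd hf 0) (SF.pd hf h 0) 0) ht k
  obtain ⟨ε', hε', C', hC'⟩ := SF.bd (SF.pd (smooth_pd hf 1) (SF.pd hf h 1) 1) ht k
  refine ⟨min ε ε', lt_min hε hε', C + C', fun s hs hst x => ?_⟩
  have h1 := hC s hs (lt_of_lt_of_le hst (min_le_left _ _)) x
  have h2 := hC' s hs (lt_of_lt_of_le hst (min_le_right _ _)) x
  rw [lap_eq]
  dsimp only
  rw [Fin.sum_univ_two]
  have := abs_add_le (_root_.pd 0 (_root_.pd 0 (f s)) x) (_root_.pd 1 (_root_.pd 1 (f s)) x)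
  have h3 : 0 ≤ ‖x‖ ^ k := by positivity
  nlinarith

/-- Combined bound with weight `(1+|x|)^3`. -/
theorem SF.lap_bd3 {T : ℝ} {f : ℝ → E2 → ℝ} (hf : ContDiff ℝ (⊤ : ℕ∞) (Function.uncurry f))
    (h : SchwartzFamily T f) {t : ℝ} (ht : t ∈ Set.Ioo (0:ℝ) T) :
    ∃ ε > 0, ∃ C : ℝ, ∀ s ∈ Set.Ioo (0:ℝ) T, |s - t| < ε → ∀ x,
      |lap (f s) x| ≤ C * (1 + ‖x‖) ^ (-3 : ℝ) ∧ |lap (f s) x| ≤ C := by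
  obtain ⟨ε, hε, C, hC⟩ := SF.lap_bd hf h ht 0
  obtain ⟨ε', hε', C', hC'⟩ := SF.lap_bd hf h ht 3
  refine ⟨min ε ε', lt_min hε hε', 4 * (C + C'), fun s hs hst x => ?_⟩
  have h1 := hC s hs (lt_of_lt_of_le hst (min_le_left _ _)) x
  have h2 := hC' s hs (lt_of_lt_of_le hst (min_le_right _ _)) x
  rw [pow_zero, one_mul] at h1
  have h0 := abs_nonneg (lap (f s) x)
  have hx := norm_nonneg x
  have hC'0 : 0 ≤ C' := le_trans (by positivity) h2
  refine ⟨?_, by linarith⟩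
  have e : (1 + ‖x‖) ^ (-3 : ℝ) = ((1 + ‖x‖) ^ 3)⁻¹ := by
    rw [Real.rpow_neg (by positivity)]
    norm_cast
  rw [e, ← div_eq_mul_inv, le_div_iff₀ (by positivity)]
  have : (1 + ‖x‖) ^ 3 ≤ 4 * (1 + ‖x‖ ^ 3) := by
    nlinarith [mul_nonneg (add_nonneg zero_le_one hx) (sq_nonneg (1 - ‖x‖))]
  calc |lap (f s) x| * (1 + ‖x‖) ^ 3 ≤ |lap (f s) x| * (4 * (1 + ‖x‖ ^ 3)) := by gcongr
    _ ≤ _ := by nlinarith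

theorem deriv_lap_sq {T : ℝ} {f : ℝ → E2 → ℝ} (hf : ContDiff ℝ (⊤ : ℕ∞) (Function.uncurry f))
    (h : SchwartzFamily T f) (h' : SchwartzFamily T (dt f)) {t : ℝ} (ht : t ∈ Set.Ioo (0:ℝ) T) :
    HasDerivAt (fun s => ∫ x, lap (f s) x ^ 2) (2 * ∫ x, lap (f t) x * lap (dt f t) x) t := by
  obtain ⟨ε, hε, C, hC⟩ := SF.lap_bd3 hf h ht
  obtain ⟨ε', hε', C', hC'⟩ := SF.lap_bd3 (smooth_dt hf) h' ht
  have hnh : Set.Ioo (0:ℝ) T ∩ Metric.ball t (min ε ε') ∈ nhds t :=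
    Filter.inter_mem (isOpen_Ioo.mem_nhds ht) (Metric.ball_mem_nhds t (lt_min hε hε'))
  have := (hasDerivAt_integral_of_dominated_loc_of_deriv_le (μ := (volume : Measure E2))
    (F := fun s x => lap (f s) x ^ 2) (F' := fun s x => 2 * (lap (f s) x * lap (dt f s) x))
    (bound := fun x => 2 * C * C' * (1 + ‖x‖) ^ (-3 : ℝ)) hnh ?_ ?_ ?_ ?_ ?_ ?_).2
  · rwa [integral_const_mul] at this
  · exact Filter.Eventually.of_forall fun s =>
      ((contDiff_lap (slice_contDiff hf s)).continuous.pow 2).aestronglyMeasurable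
  · exact (SF.sz hf h ht).lap.sq.integrable
  · exact (((contDiff_lap (slice_contDiff hf t)).continuous.mul
      (contDiff_lap (slice_contDiff (smooth_dt hf) t)).continuous).const_mul 2).aestronglyMeasurable
  · refine Filter.Eventually.of_forall fun x s hs => ?_
    have hst : |s - t| < min ε ε' := by simpa [Real.dist_eq] using hs.2
    obtain ⟨a1, a2⟩ := hC s hs.1 (lt_of_lt_of_le hst (min_le_left _ _)) x
    obtain ⟨b1, b2⟩ := hC' s hs.1 (lt_of_lt_of_le hst (min_le_right _ _)) x
    rw [Real.norm_eq_abs, abs_mul, abs_mul, abs_of_nonneg (zero_le_two (α := ℝ))]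
    have := mul_le_mul a2 b1 (abs_nonneg _) ((abs_nonneg _).trans a2)
    linarith
  · exact (integrable_one_add_norm (by simp; norm_num)).const_mul _
  · refine Filter.Eventually.of_forall fun x s hs => ?_
    have := (hasDerivAt_dt (smooth_lap hf) s x).fun_pow 2
    rw [dt_lap hf] at this
    refine this.congr_deriv ?_
    norm_num
    ring

end time


theorem pd_neg (f : E2 → ℝ) (i : Fin 2) (x : E2) : pd i (fun y => - f y) x = - pd i f x := by
  unfold pd
  rw [fderiv_fun_neg]
  rfl

namespace Snap

variable {u V : Fin 2 → E2 → ℝ} {d F : Fin 3 → E2 → ℝ} {P : E2 → ℝ}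

theorem vort_le (S : Snap u V d F P) (i j : Fin 2) :
    ∫ x, pd i (u j) x ^ 2 ≤ ∫ x, (pd 0 (u 1) x - pd 1 (u 0) x) ^ 2 := by
  have hdiv := S.div
  simp only [Fin.sum_univ_two] at hdiv
  have hD : ∀ i : Fin 2, Sz ((![u 1, fun y => - u 0 y] : Fin 2 → E2 → ℝ) i) := by
    intro i
    fin_cases i
    · exact S.hu 1
    · exact (S.hu 0).neg
  have hc : ∀ (i j : Fin 2) x, pd i ((![u 1, fun y => - u 0 y] : Fin 2 → E2 → ℝ) j) x
      = pd j ((![u 1, fun y => - u 0 y] : Fin 2 → E2 → ℝ) i) x := by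
    intro i j x
    have := hdiv x
    fin_cases i <;> fin_cases j <;> simp [pd_neg] <;> linarith
  have h := divcurl hD hc
  have e : ∀ x, ∑ m, pd m ((![u 1, fun y => - u 0 y] : Fin 2 → E2 → ℝ) m) x
      = pd 0 (u 1) x - pd 1 (u 0) x := by
    intro x
    simp [Fin.sum_univ_two, pd_neg, sub_eq_add_neg]
  simp only [e] at h
  fin_cases j
  · have := h i 1
    simpa [pd_neg] using this
  · exact h i 0

theorem est (S : Snap u V d F P) {K A B X Y : ℝ} (hK : 0 ≤ K) (hA : 0 ≤ A) (hB : 0 ≤ B)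
    (hX : 0 ≤ X) (hY : 0 ≤ Y)
    (h1 : ∑ j, ∫ x, u j x ^ 2 ≤ K ^ 2) (h2 : ∑ i, ∑ k, ∫ x, pd i (d k) x ^ 2 ≤ K ^ 2)
    (h3 : ∫ x, (pd 0 (u 1) x - pd 1 (u 0) x) ^ 2 ≤ A ^ 2)
    (h4 : ∑ k, ∫ x, lap (d k) x ^ 2 ≤ B ^ 2)
    (h5 : ∑ l, ∑ j, ∫ x, pd l (lap (u j)) x ^ 2 ≤ X ^ 2)
    (h6 : ∑ k, ∫ x, lap (lap (d k)) x ^ 2 ≤ Y ^ 2) (a : Idx) :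
    Est K (A + B) (Real.sqrt (X ^ 2 + Y ^ 2)) (fl u d a) := by
  have nn : ∀ f : E2 → ℝ, 0 ≤ ∫ x, f x ^ 2 := fun f => integral_nonneg fun _ => sq_nonneg _
  have hXZ : X ≤ Real.sqrt (X ^ 2 + Y ^ 2) := Real.le_sqrt_of_sq_le (by nlinarith)
  have hYZ : Y ≤ Real.sqrt (X ^ 2 + Y ^ 2) := Real.le_sqrt_of_sq_le (by nlinarith)
  cases a with
  | inl j =>
    refine ⟨S.hu j, N2_le_of_sq_le hK (le_trans ?_ h1), fun i => ?_, fun i => ?_⟩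
    · exact Finset.single_le_sum (f := fun j => ∫ x, u j x ^ 2) (fun j _ => nn _)
        (Finset.mem_univ j)
    · have := N2_le_of_sq_le hA ((S.vort_le i j).trans h3)
      change N2 (pd i (u j)) ≤ _
      linarith
    · refine le_trans (N2_le_of_sq_le hX (le_trans ?_ h5)) hXZ
      change ∫ x, lap (pd i (u j)) x ^ 2 ≤ _
      rw [← pd_lap (S.hu j).contDiff]
      exact (Finset.single_le_sum (f := fun j => ∫ x, pd i (lap (u j)) x ^ 2) (fun j _ => nn _)
        (Finset.mem_univ j)).trans (Finset.single_le_sum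
        (f := fun i => ∑ j, ∫ x, pd i (lap (u j)) x ^ 2)
        (fun i _ => Finset.sum_nonneg fun j _ => nn _) (Finset.mem_univ i))
  | inr p =>
    obtain ⟨i, k⟩ := p
    refine ⟨S.hD i k, N2_le_of_sq_le hK (le_trans ?_ h2), fun m => ?_, fun m => ?_⟩
    · exact (Finset.single_le_sum (f := fun k => ∫ x, pd i (d k) x ^ 2) (fun j _ => nn _)
        (Finset.mem_univ k)).trans (Finset.single_le_sum
        (f := fun i => ∑ k, ∫ x, pd i (d k) x ^ 2)
        (fun i _ => Finset.sum_nonneg fun j _ => nn _) (Finset.mem_univ i))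
    · have e := divcurl (D := fun m => pd m (d k)) (fun m => S.hD m k)
        (fun a b x => pd_comm (S.hd k) a b x) m i
      have e' : ∫ x, lap (d k) x ^ 2 ≤ B ^ 2 := le_trans (Finset.single_le_sum
        (f := fun k => ∫ x, lap (d k) x ^ 2) (fun j _ => nn _) (Finset.mem_univ k)) h4
      have : N2 (pd m (pd i (d k))) ≤ B := N2_le_of_sq_le hB (e.trans e')
      change N2 (pd m (pd i (d k))) ≤ _
      linarith
    · change N2 (lap (pd m (pd i (d k)))) ≤ _
      rw [← pd_lap (contDiff_pd (S.hd k) i), ← pd_lap (S.hd k)]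
      refine ((hess_le (S.szlapd k) m i).trans (N2_le_of_sq_le hY (le_trans ?_ h6))).trans hYZ
      exact Finset.single_le_sum
        (f := fun k => ∫ x, lap (lap (d k)) x ^ 2) (fun j _ => nn _) (Finset.mem_univ k)

end Snap

theorem snap_bound (K : ℝ) (hK : 0 < K) : ∃ C : ℝ, 0 ≤ C ∧
    ∀ {u V : Fin 2 → E2 → ℝ} {d F : Fin 3 → E2 → ℝ} {P : E2 → ℝ} {A B X Y : ℝ},
    Snap u V d F P → 0 ≤ A → 0 ≤ B → 0 ≤ X → 0 ≤ Y → 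
    ∑ j, ∫ x, u j x ^ 2 ≤ K ^ 2 → ∑ i, ∑ k, ∫ x, pd i (d k) x ^ 2 ≤ K ^ 2 →
    ∫ x, (pd 0 (u 1) x - pd 1 (u 0) x) ^ 2 = A ^ 2 →
    ∑ k, ∫ x, lap (d k) x ^ 2 = B ^ 2 →
    ∑ l, ∑ j, ∫ x, pd l (lap (u j)) x ^ 2 = X ^ 2 →
    ∑ k, ∫ x, lap (lap (d k)) x ^ 2 = Y ^ 2 →
    2 * ((∑ j, ∫ x, lap (u j) x * lap (V j) x)
      + ∑ i, ∑ k, ∫ x, lap (pd i (d k)) x * lap (pd i (F k)) x)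
    + (1 / 2 : ℝ) * (X ^ 2 + Y ^ 2) ≤ C * (1 + A ^ 12 + B ^ 12) := by
  obtain ⟨C, hC, h⟩ := pG_bound Idx K (ε := 1 / 10 ^ 6) (by norm_num)
  refine ⟨64 * 10 ^ 6 * C, by positivity, ?_⟩
  intro u V d F P A B X Y S hA hB hX hY h1 h2 h3 h4 h5 h6
  obtain ⟨-, hI, hG⟩ := h (A + B) (Real.sqrt (X ^ 2 + Y ^ 2)) (fl u d) (by positivity)
    (Real.sqrt_nonneg _) (S.est hK.le hA hB hX hY h1 h2 h3.le h4.le h5.le h6.le)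
  have hE := S.energy hI
  rw [Real.sq_sqrt (by positivity)] at hG
  rw [h5, h6] at hE
  have hAB : (A + B) ^ 6 ≤ 64 * (1 + A ^ 12 + B ^ 12) := by
    have a1 : (A + B) ^ 6 ≤ 2 ^ 5 * (A ^ 6 + B ^ 6) := add_pow_le hA hB 6
    nlinarith [sq_nonneg (A ^ 6 - 1), sq_nonneg (B ^ 6 - 1), sq_nonneg (A ^ 6), sq_nonneg (B ^ 6)]
  have := mul_le_mul_of_nonneg_left hAB hC
  linarith

theorem comp_smooth {m : ℕ} {u : ℝ → E2 → EuclideanSpace ℝ (Fin m)}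
    (hu : ContDiff ℝ (⊤ : ℕ∞) (Function.uncurry u)) (j : Fin m) :
    ContDiff ℝ (⊤ : ℕ∞) (Function.uncurry fun s x => u s x j) :=
  (EuclideanSpace.proj (𝕜 := ℝ) j).contDiff.comp hu


/-- In 2D, under the energy bounds ‖u‖_{L²} ≤ K and ‖∇d‖_{L²} ≤ K:
(d/dt)(‖Δu‖² + ‖∇Δd‖²) + ½(‖∇Δu‖² + ‖Δ²d‖²) ≤ C(K)(1 + ‖ω‖¹² + ‖Δd‖¹²). -/
theorem statement17 (K : ℝ) (hK : 0 < K) :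
    ∃ C : ℝ,
      ∀ (T : ℝ) (u : ℝ → EuclideanSpace ℝ (Fin 2) → EuclideanSpace ℝ (Fin 2))
        (P : ℝ → EuclideanSpace ℝ (Fin 2) → ℝ)
        (d : ℝ → EuclideanSpace ℝ (Fin 2) → EuclideanSpace ℝ (Fin 3)),
        IsNLC 2 T u P d → SchwartzDecay 2 T u d →
        (∀ t ∈ Set.Ioo (0:ℝ) T, L2u (u t) ≤ K) →
        (∀ t ∈ Set.Ioo (0:ℝ) T, gradL2 (d t) ≤ K) →
        ∀ t ∈ Set.Ioo (0:ℝ) T, ∃ D : ℝ,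
          HasDerivAt (fun s => lapL2u (u s) ^ 2 + gradLapL2 (d s) ^ 2) D t ∧
          D + (1/2 : ℝ) * (gradLapL2u (u t) ^ 2 + bilapL2 (d t) ^ 2)
            ≤ C * (1 + vort2L2 (u t) ^ (12 : ℕ) + lapL2 (d t) ^ (12 : ℕ)) := by
  obtain ⟨C, -, hC⟩ := snap_bound K hK
  refine ⟨C, ?_⟩
  intro T u P d S hS hKu hKd t ht
  obtain ⟨s1, s2, s3, s4⟩ := hS
  have cu : ∀ j, ContDiff ℝ (⊤ : ℕ∞) (Function.uncurry fun s x => u s x j) := comp_smooth S.smooth_u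
  have cd : ∀ k, ContDiff ℝ (⊤ : ℕ∞) (Function.uncurry fun s x => d s x k) := comp_smooth S.smooth_d
  have s4' : ∀ i k, SchwartzFamily T (dt fun s => pd i (fun y => d s y k)) := s4
  have s2' : ∀ j, SchwartzFamily T (dt fun s x => u s x j) := s2
  have cD : ∀ i k, ContDiff ℝ (⊤ : ℕ∞) (Function.uncurry fun s => pd i (fun y => d s y k)) :=
    fun i k => smooth_pd (cd k) i
  have eD : ∀ i k, dt (fun s => pd i (fun y => d s y k)) t = pd i (dt (fun s y => d s y k) t) :=
    fun i k => dt_pd (cd k) i t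
  have nn : ∀ f : E2 → ℝ, 0 ≤ ∫ x, f x ^ 2 := fun f => integral_nonneg fun _ => sq_nonneg _
  have snap : Snap (fun j y => u t y j) (fun j => dt (fun s x => u s x j) t)
      (fun k y => d t y k) (fun k => dt (fun s x => d s x k) t) (P t) :=
    { hu := fun j => SF.sz (cu j) (s1 j) ht
      hV := fun j => SF.sz (smooth_dt (cu j)) (s2' j) ht
      hd := fun k => slice_contDiff (cd k) t
      hD := fun i k => SF.sz (cD i k) (s3 i k) ht
      hF := fun k => slice_contDiff (smooth_dt (cd k)) t
      hE := fun i k => by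
        rw [← eD i k]
        exact SF.sz (smooth_dt (cD i k)) (s4' i k) ht
      hP := slice_contDiff S.smooth_P t
      mom := fun x j => S.momentum t ht x j
      dir := fun x k => S.director t ht x k
      div := fun x => S.divfree t ht x
      unit := fun x => by
        have := S.unit t ht x
        rw [EuclideanSpace.norm_eq, Real.sqrt_eq_one] at this
        simpa using this }
  have hder : HasDerivAt (fun s => (∑ j, ∫ x, lap (fun y => u s y j) x ^ 2)
      + ∑ i, ∑ k, ∫ x, lap (pd i (fun y => d s y k)) x ^ 2)
      ((∑ j, 2 * ∫ x, lap (fun y => u t y j) x * lap (dt (fun s x => u s x j) t) x)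
      + ∑ i, ∑ k, 2 * ∫ x, lap (pd i (fun y => d t y k)) x
        * lap (dt (fun s => pd i (fun y => d s y k)) t) x) t :=
    (HasDerivAt.fun_sum fun j _ => deriv_lap_sq (cu j) (s1 j) (s2' j) ht).add
      (HasDerivAt.fun_sum fun i _ => HasDerivAt.fun_sum fun k _ =>
        deriv_lap_sq (cD i k) (s3 i k) (s4' i k) ht)
  have efun : (fun s => lapL2u (u s) ^ 2 + gradLapL2 (d s) ^ 2)
      = fun s => (∑ j, ∫ x, lap (fun y => u s y j) x ^ 2)
      + ∑ i, ∑ k, ∫ x, lap (pd i (fun y => d s y k)) x ^ 2 := by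
    funext s
    unfold lapL2u gradLapL2
    rw [Real.sq_sqrt (Finset.sum_nonneg fun j _ => nn _),
      Real.sq_sqrt (Finset.sum_nonneg fun i _ => Finset.sum_nonneg fun k _ => nn _)]
    simp_rw [fun k i => pd_lap (slice_contDiff (cd k) s) i]
  refine ⟨_, efun ▸ hder, ?_⟩
  have main := hC snap (A := vort2L2 (u t)) (B := lapL2 (d t)) (X := gradLapL2u (u t))
    (Y := bilapL2 (d t)) (Real.sqrt_nonneg _) (Real.sqrt_nonneg _) (Real.sqrt_nonneg _)
    (Real.sqrt_nonneg _)
    ((Real.sqrt_le_left hK.le).1 (hKu t ht)) ((Real.sqrt_le_left hK.le).1 (hKd t ht))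
    (Real.sq_sqrt (nn _)).symm (Real.sq_sqrt (Finset.sum_nonneg fun j _ => nn _)).symm
    (Real.sq_sqrt (Finset.sum_nonneg fun i _ => Finset.sum_nonneg fun k _ => nn _)).symm
    (Real.sq_sqrt (Finset.sum_nonneg fun j _ => nn _)).symm
  refine le_trans (le_of_eq ?_) main
  simp only [eD, ← Finset.mul_sum, mul_add]
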